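/- Third Growth Theorem: Let Y = (y,s) ∈ ℝ^{n+1}, r > 0, and let u ∈ C^{2,1} on the closure of Q_r(Y) satisfy −u_t + Lu ≥ 0 at every point of Q_r(Y). Let Q⁰ := Q_{r/2}(Y⁰) with Y⁰ := (y, s − (3/4)r²), and suppose |{X ∈ Q⁰ : u(X) > 0}| ≤ μ·|Q⁰| for some constant μ < 1. Then M_{r/2}(Y) ≤ β · M_r(Y), where M_ρ(Y) := max over the closure of Q_ρ(Y) of u₊, u₊ := max(u,0), and β < 1 is a positive constant depending only on n, ν, S and μ. -/

import Mathlib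

open MeasureTheory ENNReal Metric Set RealInnerProductSpace

noncomputable section

/-- `n`-dimensional Euclidean space. -/
abbrev En (n : ℕ) : Type := EuclideanSpace ℝ (Fin n)

variable {n : ℕ}

/-- Time derivative `u_t`. -/
def Dt (u : En n × ℝ → ℝ) (X : En n × ℝ) : ℝ :=
  deriv (fun t => u (X.1, t)) X.2

/-- First spatial derivative `D_i u`. -/
def Dx (u : En n × ℝ → ℝ) (i : Fin n) (X : En n × ℝ) : ℝ :=
  fderiv ℝ (fun x => u (x, X.2)) X.1 (EuclideanSpace.single i 1)

/-- Second spatial derivative `D_{ij} u`. -/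
def Dxx (u : En n × ℝ → ℝ) (i j : Fin n) (X : En n × ℝ) : ℝ :=
  Dx (Dx u j) i X

/-- `u` is of class `C^{2,1}` on `Q`: `u`, `D_i u`, `D_{ij} u`, `u_t` exist and are
continuous on `Q`. -/
structure IsC21 (u : En n × ℝ → ℝ) (Q : Set (En n × ℝ)) : Prop where
  cont : ContinuousOn u Q
  diff_t : ∀ X ∈ Q, DifferentiableAt ℝ (fun t => u (X.1, t)) X.2
  diff_x : ∀ X ∈ Q, DifferentiableAt ℝ (fun x => u (x, X.2)) X.1
  diff_xx : ∀ j : Fin n, ∀ X ∈ Q, DifferentiableAt ℝ (fun x => Dx u j (x, X.2)) X.1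
  cont_t : ContinuousOn (Dt u) Q
  cont_x : ∀ i, ContinuousOn (Dx u i) Q
  cont_xx : ∀ i j, ContinuousOn (Dxx u i j) Q

/-- Uniform parabolicity with constant `ν` on `Q`:
`ν⁻¹|ξ|² ≤ Σ a_ij ξ_i ξ_j` and `Σ a_ij² ≤ ν²`. -/
def UnifParabolic (ν : ℝ) (a : En n × ℝ → Matrix (Fin n) (Fin n) ℝ)
    (Q : Set (En n × ℝ)) : Prop :=
  ∀ X ∈ Q, (∀ ξ : Fin n → ℝ, ν⁻¹ * (∑ i, ξ i ^ 2) ≤ ∑ i, ∑ j, a X i j * ξ i * ξ j) ∧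
    (∑ i, ∑ j, (a X i j) ^ 2) ≤ ν ^ 2

/-- `Lu = Σ_{ij} a_ij D_ij u + Σ_i b_i D_i u`. -/
def Lop (a : En n × ℝ → Matrix (Fin n) (Fin n) ℝ) (b : En n × ℝ → En n)
    (u : En n × ℝ → ℝ) (X : En n × ℝ) : ℝ :=
  (∑ i, ∑ j, a X i j * Dxx u i j X) + ∑ i, b X i * Dx u i X

/-- `∫ (ess sup_t |f(x,t)|)ⁿ dx`, the `n`-th power of the `L^n_x L^∞_t` norm of `f`
over the set `Q ⊆ ℝⁿ × ℝ`. -/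
def LxnLtinfPow {E : Type*} [NNNorm E] (f : En n × ℝ → E) (Q : Set (En n × ℝ)) : ℝ≥0∞ :=
  ∫⁻ x, (essSup (fun t => (‖f (x, t)‖₊ : ℝ≥0∞)) (volume.restrict {t | (x, t) ∈ Q})) ^ n

/-- The `L^n_x L^∞_t` norm of `f` over `Q`. -/
def LxnLtinf {E : Type*} [NNNorm E] (f : En n × ℝ → E) (Q : Set (En n × ℝ)) : ℝ≥0∞ :=
  (LxnLtinfPow f Q) ^ (1 / (n : ℝ))

/-- The box `B_ρ(y) × (t₁, t₂)`. -/
def box (y : En n) (ρ t₁ t₂ : ℝ) : Set (En n × ℝ) := ball y ρ ×ˢ Ioo t₁ t₂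

/-- The standard parabolic cylinder `Q_r(Y) = B_r(y) × (s - r², s)`. -/
def pcyl (Y : En n × ℝ) (r : ℝ) : Set (En n × ℝ) := box Y.1 r (Y.2 - r ^ 2) Y.2

/-- The slanted cylinder `V_r(Y) = {(x,t) : |x - (t/s)y| < r, 0 < t < s}`. -/
def slantCyl (Y : En n × ℝ) (r : ℝ) : Set (En n × ℝ) :=
  {X | ‖X.1 - (X.2 / Y.2) • Y.1‖ < r ∧ 0 < X.2 ∧ X.2 < Y.2}

/-- Supremum of the positive part `u₊` over a set `A`. -/
def supPos (u : En n × ℝ → ℝ) (A : Set (En n × ℝ)) : ℝ :=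
  sSup ((fun X => max (u X) 0) '' A)

/-- `Ω` is a Lipschitz domain with character `(rΩ, mΩ)`: at every boundary point `y`
there is a coordinate frame, encoded by the unit "vertical" direction `e`, in which
`Ω ∩ B_{rΩ}(y)` is the region above the graph of an `mΩ`-Lipschitz function `φ`
of the tangential variables. -/
def IsLipschitzDomain (Ω : Set (En n)) (rΩ mΩ : ℝ) : Prop :=
  0 < rΩ ∧ 0 ≤ mΩ ∧
  ∀ y ∈ frontier Ω, ∃ (e : En n) (φ : En n → ℝ),
    ‖e‖ = 1 ∧ LipschitzWith (Real.toNNReal mΩ) φ ∧ φ 0 = 0 ∧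
    (∀ x, x ∈ Ω ∩ ball y rΩ ↔
      dist x y < rΩ ∧ φ ((x - y) - ⟪x - y, e⟫ • e) < ⟪x - y, e⟫) ∧
    (∀ ρ : ℝ, 0 < ρ → ρ ≤ rΩ → y + ρ • e ∈ Ω)

/-- coordinate vectors -/
def ev (i : Fin n) : En n := EuclideanSpace.single i 1

/-- `∑ A_ij T_ij` -/
def trA (A : Matrix (Fin n) (Fin n) ℝ) (T : En n →L[ℝ] En n) : ℝ :=
  ∑ i, ∑ j, A i j * ⟪T (ev i), ev j⟫

/-- trace -/
def trI (T : En n →L[ℝ] En n) : ℝ := ∑ i, ⟪T (ev i), ev i⟫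

/-- the ellipticity condition for one matrix -/
def Ell (ν : ℝ) (A : Matrix (Fin n) (Fin n) ℝ) : Prop :=
  (∀ ξ : Fin n → ℝ, ν⁻¹ * (∑ i, ξ i ^ 2) ≤ ∑ i, ∑ j, A i j * ξ i * ξ j) ∧
    (∑ i, ∑ j, (A i j) ^ 2) ≤ ν ^ 2

lemma inner_ev (x : En n) (i : Fin n) : ⟪x, ev i⟫ = x i := by
  simp [ev, EuclideanSpace.inner_single_right]

lemma linalg_main (ν : ℝ) (hν : 1 ≤ ν) (A : Matrix (Fin n) (Fin n) ℝ) (hA : Ell ν A)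
    (T : En n →L[ℝ] En n) (hs : ∀ a b, ⟪T a, b⟫ = ⟪a, T b⟫) (hp : ∀ a, 0 ≤ ⟪T a, a⟫) :
    ν⁻¹ * trI T ≤ trA A T ∧ 0 ≤ trI T ∧ |T.det| ≤ (trI T) ^ n := by
  have hT : (T : En n →ₗ[ℝ] En n).IsSymmetric := hs
  have hfr : Module.finrank ℝ (En n) = n := by simp
  set b := hT.eigenvectorBasis hfr with hb
  set l := hT.eigenvalues hfr with hl
  have hTb : ∀ k, T (b k) = l k • b k := fun k => by
    exact hT.apply_eigenvectorBasis hfr k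
  have hbn : ∀ k, ⟪b k, b k⟫ = 1 := fun k => by
    rw [real_inner_self_eq_norm_sq, b.norm_eq_one]; norm_num
  have hl0 : ∀ k, 0 ≤ l k := fun k => by
    have := hp (b k); rw [hTb, inner_smul_left, hbn] at this; simpa using this
  have hexp : ∀ i j, ⟪T (ev i), ev j⟫ = ∑ k, l k * ((b k) i * (b k) j) := by
    intro i j
    rw [← b.sum_inner_mul_inner (T (ev i)) (ev j)]
    refine Finset.sum_congr rfl fun k _ => ?_
    rw [hs, hTb, inner_smul_right, inner_ev, real_inner_comm, inner_ev]; ring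
  have hbs : ∀ k, ∑ i, (b k) i ^ 2 = 1 := fun k => by
    rw [← EuclideanSpace.real_norm_sq_eq, b.norm_eq_one]; norm_num
  have htr : trI T = ∑ k, l k := by
    unfold trI
    simp_rw [hexp]
    rw [Finset.sum_comm]
    refine Finset.sum_congr rfl fun k _ => ?_
    rw [← Finset.mul_sum]
    have := hbs k
    simp_rw [pow_two] at this
    rw [this, mul_one]
  have htrA : trA A T = ∑ k, l k * ∑ i, ∑ j, A i j * (b k) i * (b k) j := by
    unfold trA
    simp_rw [hexp, Finset.mul_sum]
    rw [Finset.sum_congr rfl (fun i _ => Finset.sum_comm), Finset.sum_comm]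
    refine Finset.sum_congr rfl fun k _ => Finset.sum_congr rfl fun i _ =>
      Finset.sum_congr rfl fun j _ => by ring
  refine ⟨?_, ?_, ?_⟩
  · rw [htr, htrA, Finset.mul_sum]
    refine Finset.sum_le_sum fun k _ => ?_
    have := hA.1 (fun i => (b k) i)
    rw [hbs, mul_one] at this
    nlinarith [hl0 k]
  · rw [htr]; exact Finset.sum_nonneg fun k _ => hl0 k
  · have hd : T.det = ∏ k, l k := by
      have := hT.det_eq_prod_eigenvalues hfr
      simpa using this
    rw [hd, htr, abs_of_nonneg (Finset.prod_nonneg fun k _ => hl0 k)]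
    calc ∏ k, l k ≤ ∏ _k : Fin n, ∑ k, l k :=
          Finset.prod_le_prod (fun k _ => hl0 k)
            (fun k _ => Finset.single_le_sum (fun k _ => hl0 k) (Finset.mem_univ k))
      _ = _ := by simp

lemma ell_trace (ν : ℝ) (hν : 1 ≤ ν) (A : Matrix (Fin n) (Fin n) ℝ) (hA : Ell ν A) :
    ∑ i, A i i ≤ n * ν := by
  have : ∀ i, A i i ≤ ν := fun i => by
    have h1 : (A i i) ^ 2 ≤ ν ^ 2 := by
      refine le_trans ?_ hA.2
      calc (A i i) ^ 2 ≤ ∑ j, (A i j) ^ 2 :=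
            Finset.single_le_sum (f := fun j => (A i j) ^ 2) (fun _ _ => sq_nonneg _) (Finset.mem_univ i)
        _ ≤ _ := Finset.single_le_sum (f := fun i => ∑ j, (A i j) ^ 2)
            (fun _ _ => Finset.sum_nonneg fun _ _ => sq_nonneg _) (Finset.mem_univ i)
    exact le_trans (le_abs_self _) (abs_le_of_sq_le_sq h1 (by linarith))
  calc ∑ i, A i i ≤ ∑ _i : Fin n, ν := Finset.sum_le_sum fun i _ => this i
    _ = _ := by simp

/-- The second derivative test. -/
lemma second_test (f : ℝ → ℝ) (f' : ℝ → ℝ) (f2 : ℝ)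
    (h1 : ∀ᶠ t in nhds 0, HasDerivAt f (f' t) t) (h2 : HasDerivAt f' f2 0)
    (hm : IsLocalMax f 0) : f2 ≤ 0 := by
  by_contra hc
  push Not at hc
  have hd : deriv f =ᶠ[nhds 0] f' := h1.mono fun t ht => ht.deriv
  have hdd : deriv (deriv f) 0 = f2 := by rw [hd.deriv_eq]; exact h2.deriv
  have h0 : deriv f 0 = 0 := hm.deriv_eq_zero
  have hmin := isLocalMin_of_deriv_deriv_pos (f := f) (x₀ := 0) (by rw [hdd]; exact hc) h0
    (h1.self_of_nhds.continuousAt)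
  have hcst : f =ᶠ[nhds 0] fun _ => f 0 := by
    filter_upwards [hm, hmin] with t a b using le_antisymm a b
  have : deriv f =ᶠ[nhds 0] fun _ => 0 := by
    have := hcst.deriv
    simpa using this
  have := this.deriv_eq
  rw [hdd] at this
  simp at this; linarith

/-- Smooth data on an open set, with continuous extension. -/
structure Reg (v : En n × ℝ → ℝ) (G : En n × ℝ → En n) (H : En n × ℝ → (En n →L[ℝ] En n))
    (vt : En n × ℝ → ℝ) (U : Set (En n × ℝ)) : Prop where
  cv : Continuous v
  cG : Continuous G
  cH : Continuous H
  ct : Continuous vt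
  dx : ∀ X ∈ U, HasFDerivAt (fun x => v (x, X.2)) (innerSL ℝ (G X)) X.1
  dxx : ∀ X ∈ U, HasFDerivAt (fun x => G (x, X.2)) (H X) X.1
  dt : ∀ X ∈ U, HasDerivAt (fun t => v (X.1, t)) (vt X) X.2
  symm : ∀ X ∈ U, ∀ a b, ⟪H X a, b⟫ = ⟪a, H X b⟫

/-- At a spatial local max of `w - ⟪p,x⟫` the gradient is `p`. -/
lemma contact_grad (w : En n → ℝ) (G p x y : En n) 
    (hd : HasFDerivAt w (innerSL ℝ G) x) (hm : IsLocalMax (fun z => w z - ⟪p, z - y⟫) x) : G = p := by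
  have h2 : HasFDerivAt (fun z => w z - ⟪p, z - y⟫) (innerSL ℝ G - innerSL ℝ p) x := by
    refine hd.sub ?_
    have := ((innerSL ℝ p).hasFDerivAt (x := x)).sub_const (⟪p, y⟫)
    refine this.congr_of_eventuallyEq (Filter.Eventually.of_forall fun z => ?_)
    simp [inner_sub_right]
  have h0 := hm.hasFDerivAt_eq_zero h2
  have h3 : innerSL ℝ G = innerSL ℝ p := sub_eq_zero.1 h0
  exact ext_inner_right ℝ fun z => by
    have := congrArg (fun L => L z) h3
    simpa using this

/-- At a spatial local max, the Hessian is nonpositive. -/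
lemma contact_hess (w : En n → ℝ) (G : En n → En n) (H : En n →L[ℝ] En n) (p x y : En n) 
    (hd : ∀ᶠ z in nhds x, HasFDerivAt w (innerSL ℝ (G z)) z) (hdd : HasFDerivAt G H x)
    (hm : IsLocalMax (fun z => w z - ⟪p, z - y⟫) x) (e : En n) : ⟪H e, e⟫ ≤ 0 := by
  have hl : ∀ t : ℝ, HasDerivAt (fun t : ℝ => x + t • e) e t := fun t => by
    have := ((hasDerivAt_id t).smul_const e).const_add x
    simpa using this
  have hc : Filter.Tendsto (fun t : ℝ => x + t • e) (nhds 0) (nhds x) := by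
    have : Continuous (fun t : ℝ => x + t • e) := by fun_prop
    simpa using this.tendsto 0
  refine second_test (fun t => w (x + t • e) - ⟪p, x + t • e - y⟫)
    (fun t => ⟪G (x + t • e), e⟫ - ⟪p, e⟫) _ ?_ ?_ ?_
  · filter_upwards [hc.eventually hd] with t ht
    refine HasDerivAt.sub ?_ ?_
    · have := ht.comp_hasDerivAt t (hl t)
      simpa [Function.comp_def] using this
    · have h1 : HasDerivAt (fun t : ℝ => x + t • e - y) e t := (hl t).sub_const y
      have := (innerSL ℝ p).hasFDerivAt.comp_hasDerivAt t h1
      simpa [Function.comp_def] using this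
  · refine HasDerivAt.sub_const _ ?_
    have h0 : HasFDerivAt G H (x + (0:ℝ) • e) := by simpa using hdd
    have h1 := h0.comp_hasDerivAt (0:ℝ) (hl 0)
    have := (innerSL ℝ e).hasFDerivAt.comp_hasDerivAt (0:ℝ) h1
    simpa [real_inner_comm, Function.comp_def] using this
  · have := hc.eventually hm
    simpa [IsLocalMax, IsMaxFilter] using this

/-- Weighted area inequality, for noninjective maps. -/
lemma area_ineq (f : En n → En n) (f' : En n → (En n →L[ℝ] En n)) (C : Set (En n))
    (hC : MeasurableSet C) (hf : Continuous f) (hf' : ∀ x ∈ C, HasFDerivAt f (f' x) x)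
    (hcf' : Continuous f')
    (φ : En n → ℝ≥0∞) (hφ : Measurable φ) (g : En n → ℝ≥0∞)
    (h1 : ∀ p, φ p ≠ 0 → ∃ x ∈ C, f x = p) (h2 : ∀ x ∈ C, φ (f x) ≤ g x) :
    ∫⁻ p, φ p ≤ ∫⁻ x in C, ENNReal.ofReal |(f' x).det| * g x := by
  set μ : Measure (En n) := (volume.restrict C).withDensity (fun x => ENNReal.ofReal |(f' x).det|)
  have hdm : Measurable (fun x => ENNReal.ofReal |(f' x).det|) :=
    (ENNReal.continuous_ofReal.comp (ContinuousLinearMap.continuous_det.comp hcf').abs).measurable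
  have hsm : MeasurableSet (Function.support φ) := measurableSet_support hφ
  have hle : volume.restrict (Function.support φ) ≤ μ.map f := by
    refine Measure.le_iff.2 fun A hA => ?_
    rw [Measure.restrict_apply hA, Measure.map_apply hf.measurable hA,
      withDensity_apply _ (hf.measurable hA), Measure.restrict_restrict (hf.measurable hA)]
    have hm : MeasurableSet (f ⁻¹' A ∩ C) := (hf.measurable hA).inter hC
    refine le_trans (measure_mono ?_) (addHaar_image_le_lintegral_abs_det_fderiv volume hm
      (fun x hx => (hf' x hx.2).hasFDerivWithinAt))
    rintro p ⟨hpA, hp⟩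
    obtain ⟨x, hx, rfl⟩ := h1 p hp
    exact ⟨x, ⟨hpA, hx⟩, rfl⟩
  calc ∫⁻ p, φ p = ∫⁻ p in Function.support φ, φ p := by
        rw [setLIntegral_eq_of_support_subset]
        exact subset_rfl
    _ ≤ ∫⁻ p, φ p ∂(μ.map f) := lintegral_mono' hle le_rfl
    _ = ∫⁻ x, φ (f x) ∂μ := lintegral_map hφ hf.measurable
    _ = ∫⁻ x in C, ENNReal.ofReal |(f' x).det| * φ (f x) := by
        exact lintegral_withDensity_eq_lintegral_mul _ hdm (hφ.comp hf.measurable)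
    _ ≤ _ := setLIntegral_mono' hC fun x hx => by gcongr; exact h2 x hx

lemma left_min_deriv (h : ℝ → ℝ) (d t : ℝ) (hd : HasDerivAt h d t)
    (hm : ∀ᶠ s in nhdsWithin t (Iio t), h t ≤ h s) : d ≤ 0 := by
  have h1 : Filter.Tendsto (slope h t) (nhdsWithin t (Iio t)) (nhds d) :=
    (hasDerivAt_iff_tendsto_slope.1 hd).mono_left (nhdsWithin_mono _ (fun s hs => ne_of_lt hs))
  refine le_of_tendsto h1 ?_
  filter_upwards [hm, self_mem_nhdsWithin] with s hs hst
  rw [slope_def_field]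
  exact div_nonpos_of_nonneg_of_nonpos (by linarith) (by have : s < t := hst; linarith)

def supF (w : En n × ℝ → ℝ) (y : En n) (s tb : ℝ) (q : En n × ℝ) : ℝ :=
  sSup ((fun z : En n × ℝ => w (z.1, tb + z.2 * (q.2 - tb)) - ⟪q.1, z.1 - y⟫) ''
    (closedBall y s ×ˢ Icc (0:ℝ) 1))

lemma supF_cont (w : En n × ℝ → ℝ) (hw : Continuous w) (y : En n) (s tb : ℝ) :
    Continuous (supF w y s tb) := by
  have hK : IsCompact (closedBall y s ×ˢ Icc (0:ℝ) 1) := (isCompact_closedBall y s).prod isCompact_Icc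
  refine hK.continuous_sSup (f := fun q : En n × ℝ => fun z : En n × ℝ =>
    w (z.1, tb + z.2 * (q.2 - tb)) - ⟪q.1, z.1 - y⟫) ?_
  simp only [Function.HasUncurry.uncurry]
  fun_prop

lemma le_supF (w : En n × ℝ → ℝ) (hw : Continuous w) (y : En n) (s tb : ℝ) (p : En n) (t : ℝ)
    (x : En n) (hx : x ∈ closedBall y s) (t' : ℝ) (ht' : t' ∈ Icc tb t) :
    w (x, t') - ⟪p, x - y⟫ ≤ supF w y s tb (p, t) := by
  have hK : IsCompact (closedBall y s ×ˢ Icc (0:ℝ) 1) := (isCompact_closedBall y s).prod isCompact_Icc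
  have hb : BddAbove ((fun z : En n × ℝ => w (z.1, tb + z.2 * (t - tb)) - ⟪p, z.1 - y⟫) ''
    (closedBall y s ×ˢ Icc (0:ℝ) 1)) := by
    refine (hK.image ?_).bddAbove
    fun_prop
  refine le_csSup hb ?_
  rcases eq_or_lt_of_le (ht'.1.trans ht'.2) with h | h
  · refine ⟨(x, 0), ⟨hx, by simp⟩, ?_⟩
    have : t' = tb := le_antisymm (by rw [h]; exact ht'.2) ht'.1
    simp [this]
  · refine ⟨(x, (t' - tb) / (t - tb)), ⟨hx, ?_, ?_⟩, ?_⟩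
    · exact div_nonneg (by linarith [ht'.1]) (by linarith)
    · exact div_le_one_of_le₀ (by linarith [ht'.2]) (by linarith)
    · have : t - tb ≠ 0 := by linarith
      simp only
      rw [div_mul_cancel₀ _ this]; simp

lemma supF_attained (w : En n × ℝ → ℝ) (hw : Continuous w) (y : En n) (s tb : ℝ) (hs : 0 ≤ s)
    (p : En n) (t : ℝ) (ht : tb ≤ t) :
    ∃ x ∈ closedBall y s, ∃ t' ∈ Icc tb t, supF w y s tb (p, t) = w (x, t') - ⟪p, x - y⟫ := by
  have hK : IsCompact (closedBall y s ×ˢ Icc (0:ℝ) 1) := (isCompact_closedBall y s).prod isCompact_Icc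
  have hne : (closedBall y s ×ˢ Icc (0:ℝ) 1).Nonempty := ⟨(y, 0), by simp [hs]⟩
  obtain ⟨⟨x, σ⟩, ⟨hx, hσ⟩, h1, -⟩ := hK.exists_sSup_image_eq_and_ge hne
    (f := fun z : En n × ℝ => w (z.1, tb + z.2 * (t - tb)) - ⟪p, z.1 - y⟫) (by fun_prop)
  refine ⟨x, hx, tb + σ * (t - tb), ⟨?_, ?_⟩, h1⟩
  · nlinarith [hσ.1]
  · nlinarith [hσ.2]

/-- contact set -/
def Cset (w : En n × ℝ → ℝ) (G : En n × ℝ → En n) (wt : En n × ℝ → ℝ) (y : En n) (s tb κ : ℝ) :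
    Set (En n × ℝ) :=
  {X | X.1 ∈ ball y s ∧ ‖G X‖ < κ ∧ 0 < wt X ∧ 0 < w X ∧
    supF w y s tb (G X, X.2) ≤ w X - ⟪G X, X.1 - y⟫}

lemma Cset_meas (w : En n × ℝ → ℝ) (G : En n × ℝ → En n) (wt : En n × ℝ → ℝ) (y : En n) (s tb κ : ℝ)
    (hw : Continuous w) (hG : Continuous G) (ht : Continuous wt) :
    MeasurableSet (Cset w G wt y s tb κ) := by
  have hF := supF_cont w hw y s tb
  refine MeasurableSet.inter ?_ (MeasurableSet.inter ?_ (MeasurableSet.inter ?_ (MeasurableSet.inter ?_ ?_)))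
  · exact (isOpen_ball.preimage continuous_fst).measurableSet
  · exact (isOpen_lt (hG.norm) continuous_const).measurableSet
  · exact (isOpen_lt continuous_const ht).measurableSet
  · exact (isOpen_lt continuous_const hw).measurableSet
  · refine (isClosed_le (hF.comp (hG.prodMk continuous_snd)) ?_).measurableSet
    fun_prop

/-- ABP core estimate. -/
lemma abp_core (w : En n × ℝ → ℝ) (G : En n × ℝ → En n) (H : En n × ℝ → (En n →L[ℝ] En n))
    (wt : En n × ℝ → ℝ) (U : Set (En n × ℝ)) (hR : Reg w G H wt U) (y : En n) (s tb T m : ℝ)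
    (hs : 0 < s) (hT : tb < T) (hm : 0 < m) (hU : closedBall y s ×ˢ Ioo tb T ⊆ U)
    (hbot : ∀ x ∈ closedBall y s, w (x, tb) ≤ 0)
    (hlat : ∀ x ∈ sphere y s, ∀ t ∈ Icc tb T, w (x, t) ≤ 0)
    (x0 : En n) (hx0 : x0 ∈ closedBall y s) (hw0 : m ≤ w (x0, T)) :
    ENNReal.ofReal (m / 2) * volume (ball (0 : En n) (m / (4 * s))) ≤
      ∫⁻ x, ∫⁻ t in Ioo tb T, (Cset w G wt y s tb (m / (4 * s))).indicator
        (fun X => ENNReal.ofReal |(H X).det| * ENNReal.ofReal (wt X)) (x, t) := by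
  set κ := m / (4 * s) with hκ
  have hκs : κ * s = m / 4 := by rw [hκ]; field_simp
  have hκ0 : 0 < κ := by positivity
  set C := Cset w G wt y s tb κ with hC
  have hCm : MeasurableSet C := Cset_meas w G wt y s tb κ hR.cv hR.cG hR.ct
  set F := supF w y s tb with hF
  have hFc : Continuous F := supF_cont w hR.cv y s tb
  set f : En n → ℝ → ℝ := fun p t => max (F (p, t)) (κ * s) with hf
  have hfc : Continuous (Function.uncurry f) := by
    have : Function.uncurry f = fun q : En n × ℝ => max (F q) (κ * s) := by
      ext q; rfl
    rw [this]; exact hFc.max continuous_const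
  have hinner : ∀ p : En n, ‖p‖ < κ → ∀ x ∈ closedBall y s, |⟪p, x - y⟫| ≤ κ * s := by
    intro p hp x hx
    refine (abs_real_inner_le_norm _ _).trans ?_
    have : ‖x - y‖ ≤ s := by simpa [dist_eq_norm] using hx
    gcongr
  -- Lipschitz bound
  obtain ⟨L, hL⟩ : ∃ L, ∀ X ∈ closedBall y s ×ˢ Icc tb T, ‖wt X‖ ≤ L :=
    ((isCompact_closedBall y s).prod isCompact_Icc).exists_bound_of_continuousOn hR.ct.continuousOn
  have hL0 : 0 ≤ L := le_trans (norm_nonneg _) (hL (y, tb) ⟨by simp [hs.le], by simp [hT.le]⟩)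
  have hwL : ∀ x ∈ closedBall y s, ∀ t ∈ Icc tb T, ∀ t' ∈ Icc tb T, t ≤ t' →
      w (x, t') - w (x, t) ≤ L * (t' - t) := by
    intro x hx
    have hcw := hR.cv
    refine Convex.image_sub_le_mul_sub_of_deriv_le (f := fun t => w (x, t)) (convex_Icc tb T) ?_ ?_ ?_
    · fun_prop
    · rw [interior_Icc]
      exact fun t ht => (hR.dt (x, t) (hU ⟨hx, ht⟩)).differentiableAt.differentiableWithinAt
    · rw [interior_Icc]
      intro t ht
      have := (hR.dt (x, t) (hU ⟨hx, ht⟩)).deriv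
      simp only at this
      rw [this]
      exact (le_abs_self _).trans (hL (x, t) ⟨hx, Ioo_subset_Icc_self ht⟩)
  have hFmono : ∀ p, ∀ t ∈ Icc tb T, ∀ t' ∈ Icc tb T, t ≤ t' → F (p, t) ≤ F (p, t') := by
    intro p t ht t' ht' htt
    obtain ⟨x, hx, t1, ht1, h⟩ := supF_attained w hR.cv y s tb hs.le p t ht.1
    rw [hF, h]
    exact le_supF w hR.cv y s tb p t' x hx t1 ⟨ht1.1, ht1.2.trans htt⟩
  have hFlip : ∀ p, ∀ t ∈ Icc tb T, ∀ t' ∈ Icc tb T, t ≤ t' → F (p, t') ≤ F (p, t) + L * (t' - t) := by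
    intro p t ht t' ht' htt
    obtain ⟨x, hx, t1, ht1, h⟩ := supF_attained w hR.cv y s tb hs.le p t' ht'.1
    rcases le_total t1 t with h1 | h1
    · have := le_supF w hR.cv y s tb p t x hx t1 ⟨ht1.1, h1⟩
      rw [← h] at this
      have h2 : 0 ≤ L * (t' - t) := mul_nonneg hL0 (by linarith)
      linarith
    · have := le_supF w hR.cv y s tb p t x hx t ⟨ht.1, le_rfl⟩
      have h2 := hwL x hx t ht t1 ⟨ht1.1, ht1.2.trans ht'.2⟩ h1
      have h3 : L * (t1 - t) ≤ L * (t' - t) := by gcongr; exact ht1.2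
      rw [hF, h]
      linarith
  have hac : ∀ p, AbsolutelyContinuousOnInterval (f p) tb T := by
    intro p
    refine LipschitzOnWith.absolutelyContinuousOnInterval (K := L.toNNReal) ?_
    rw [uIcc_of_le hT.le]
    refine LipschitzOnWith.of_le_add_mul _ fun a ha b hb => ?_
    have hLc : ((L.toNNReal : NNReal) : ℝ) = L := Real.coe_toNNReal L hL0
    rw [hLc]
    have hnn : 0 ≤ L * dist a b := mul_nonneg hL0 dist_nonneg
    simp only [hf]
    refine max_le ?_ ((le_max_right _ _).trans (by linarith))
    rcases le_total a b with h | h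
    · have := hFmono p a ha b hb h
      linarith [le_max_left (F (p, b)) (κ * s)]
    · have := hFlip p b hb a ha h
      rw [Real.dist_eq, abs_of_nonneg (by linarith)]
      linarith [le_max_left (F (p, b)) (κ * s)]
  -- endpoints
  have hend : ∀ p ∈ ball (0 : En n) κ, m / 2 ≤ f p T - f p tb := by
    intro p hp
    have hp' : ‖p‖ < κ := by simpa using hp
    have h1 : f p tb ≤ κ * s := by
      refine max_le ?_ le_rfl
      obtain ⟨x, hx, t1, ht1, h⟩ := supF_attained w hR.cv y s tb hs.le p tb le_rfl
      have : t1 = tb := le_antisymm ht1.2 ht1.1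
      rw [hF, h, this]
      have := hbot x hx
      have := (abs_le.1 (hinner p hp' x hx)).1
      linarith
    have h2 : m - κ * s ≤ f p T := by
      refine le_trans ?_ (le_max_left _ _)
      have := le_supF w hR.cv y s tb p T x0 hx0 T ⟨hT.le, le_rfl⟩
      have := (abs_le.1 (hinner p hp' x0 hx0)).2
      linarith
    linarith
  -- contact
  have hcontact : ∀ p ∈ ball (0 : En n) κ, ∀ t ∈ Ioo tb T, 0 < deriv (f p) t →
      ∃ x, (x, t) ∈ C ∧ G (x, t) = p := by
    intro p hp t ht hd
    have hp' : ‖p‖ < κ := by simpa using hp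
    have hdiff : HasDerivAt (f p) (deriv (f p) t) t :=
      (differentiableAt_of_deriv_ne_zero hd.ne').hasDerivAt
    have hgt : κ * s < F (p, t) := by
      by_contra hle
      push Not at hle
      have : IsLocalMin (f p) t := Filter.Eventually.of_forall fun t' => by
        simp only [hf]; rw [max_eq_right hle]; exact le_max_right _ _
      rw [this.deriv_eq_zero] at hd
      exact lt_irrefl _ hd
    have hft : f p t = F (p, t) := max_eq_left hgt.le
    obtain ⟨x, hx, t1, ht1, h⟩ := supF_attained w hR.cv y s tb hs.le p t ht.1.le
    have htt : t1 = t := by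
      by_contra hne
      have hlt : t1 < t := lt_of_le_of_ne ht1.2 hne
      have : deriv (f p) t ≤ 0 := by
        refine left_min_deriv (f p) _ t hdiff ?_
        filter_upwards [Ioo_mem_nhdsLT hlt] with t2 ht2
        rw [hft, hF, h]
        refine le_trans ?_ (le_max_left _ _)
        exact le_supF w hR.cv y s tb p t2 x hx t1 ⟨ht1.1, ht2.1.le⟩
      linarith
    rw [htt] at h
    have hinn := (abs_le.1 (hinner p hp' x hx))
    have hFe : F (p, t) = w (x, t) - ⟪p, x - y⟫ := h
    have hwpos : 0 < w (x, t) := by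
      have := hinn.1
      have := hinn.2
      linarith
    have hxb : x ∈ ball y s := by
      rcases lt_or_eq_of_le (mem_closedBall.1 hx) with h1 | h1
      · exact h1
      · have := hlat x h1 t ⟨ht.1.le, ht.2.le⟩
        linarith
    have hmax : IsLocalMax (fun z => w (z, t) - ⟪p, z - y⟫) x := by
      filter_upwards [isOpen_ball.mem_nhds hxb] with z hz
      rw [← hFe]
      exact le_supF w hR.cv y s tb p t z (ball_subset_closedBall hz) t ⟨ht.1.le, le_rfl⟩
    have hGp : G (x, t) = p :=
      contact_grad (fun z => w (z, t)) (G (x, t)) p x y (hR.dx (x, t) (hU ⟨hx, ht⟩)) hmax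
    have hwt : deriv (f p) t ≤ wt (x, t) := by
      have h1 := hdiff.sub ((hR.dt (x, t) (hU ⟨hx, ht⟩)))
      have := left_min_deriv _ _ t h1 (by
        filter_upwards [Ioo_mem_nhdsLT ht.1] with t2 ht2
        have e1 : f p t - w (x, t) = - ⟪p, x - y⟫ := by rw [hft, hFe]; ring
        have := (le_supF w hR.cv y s tb p t2 x hx t2 ⟨ht2.1.le, le_rfl⟩).trans
          (le_max_left _ (κ * s))
        have e2 : w (x, t2) - ⟪p, x - y⟫ ≤ f p t2 := this
        simp only [Pi.sub_apply]
        linarith)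
      linarith
    refine ⟨x, ⟨hxb, by rw [hGp]; exact hp', lt_of_lt_of_le hd hwt, hwpos, ?_⟩, hGp⟩
    rw [hGp]; exact hFe.le
  have hcontact2 : ∀ x t, t ∈ Ioo tb T → (x, t) ∈ C → deriv (f (G (x, t))) t ≤ wt (x, t) := by
    intro x t ht hxC
    by_contra hlt
    push Not at hlt
    have hx : x ∈ closedBall y s := ball_subset_closedBall hxC.1
    have hpos : 0 < deriv (f (G (x, t))) t := lt_trans hxC.2.2.1 hlt
    have hdiff : HasDerivAt (f (G (x, t))) (deriv (f (G (x, t))) t) t :=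
      (differentiableAt_of_deriv_ne_zero hpos.ne').hasDerivAt
    set p := G (x, t) with hp
    have hgt : κ * s < F (p, t) := by
      by_contra hle
      push Not at hle
      have : IsLocalMin (f p) t := Filter.Eventually.of_forall fun t' => by
        simp only [hf]; rw [max_eq_right hle]; exact le_max_right _ _
      rw [this.deriv_eq_zero] at hpos
      exact lt_irrefl _ hpos
    have hft : f p t = F (p, t) := max_eq_left hgt.le
    have h1 := hdiff.sub ((hR.dt (x, t) (hU ⟨hx, ht⟩)))
    have := left_min_deriv _ _ t h1 (by
        filter_upwards [Ioo_mem_nhdsLT ht.1] with t2 ht2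
        have h5 : F (p, t) ≤ w (x, t) - ⟪p, x - y⟫ := hxC.2.2.2.2
        have e1 : f p t - w (x, t) ≤ - ⟪p, x - y⟫ := by rw [hft]; linarith
        have := (le_supF w hR.cv y s tb p t2 x hx t2 ⟨ht2.1.le, le_rfl⟩).trans
          (le_max_left _ (κ * s))
        have e2 : w (x, t2) - ⟪p, x - y⟫ ≤ f p t2 := this
        simp only [Pi.sub_apply]
        linarith)
    linarith
  have hdm : Measurable (fun q : En n × ℝ => ENNReal.ofReal (deriv (f q.1) q.2)) :=
    (measurable_deriv_with_param hfc).ennreal_ofReal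
  calc ENNReal.ofReal (m / 2) * volume (ball (0 : En n) κ)
      = ∫⁻ p in ball (0 : En n) κ, ENNReal.ofReal (m / 2) := by rw [setLIntegral_const]
    _ ≤ ∫⁻ p in ball (0 : En n) κ, ∫⁻ t in Ioo tb T, ENNReal.ofReal (deriv (f p) t) := by
        refine setLIntegral_mono' measurableSet_ball fun p hp => ?_
        have h1 := (hac p).integral_deriv_eq_sub
        have h2 := (hac p).intervalIntegrable_deriv
        rw [intervalIntegrable_iff_integrableOn_Ioo_of_le hT.le] at h2
        rw [intervalIntegral.integral_of_le hT.le, integral_Ioc_eq_integral_Ioo] at h1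
        have h3 := integral_eq_lintegral_pos_part_sub_lintegral_neg_part h2
        have h4 := hend p hp
        rw [← h1, h3] at h4
        refine ENNReal.ofReal_le_of_le_toReal ?_
        refine h4.trans ?_
        have : 0 ≤ (∫⁻ (a : ℝ) in Ioo tb T, ENNReal.ofReal (-deriv (f p) a)).toReal := by positivity
        linarith
    _ = ∫⁻ t in Ioo tb T, ∫⁻ p in ball (0 : En n) κ, ENNReal.ofReal (deriv (f p) t) :=
        lintegral_lintegral_swap hdm.aemeasurable
    _ ≤ ∫⁻ t in Ioo tb T, ∫⁻ x, C.indicator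
          (fun X => ENNReal.ofReal |(H X).det| * ENNReal.ofReal (wt X)) (x, t) := by
        refine setLIntegral_mono' measurableSet_Ioo fun t ht => ?_
        set Ct : Set (En n) := (fun x => (x, t)) ⁻¹' C
        have hCt : MeasurableSet Ct := (by fun_prop : Measurable fun x : En n => (x, t)) hCm
        have hcG := hR.cG
        have hcH := hR.cH
        have := area_ineq (fun x => G (x, t)) (fun x => H (x, t)) Ct hCt (by fun_prop)
          (fun x hx => hR.dxx (x, t) (hU ⟨ball_subset_closedBall hx.1, ht⟩)) (by fun_prop)
          ((ball (0 : En n) κ).indicator fun p => ENNReal.ofReal (deriv (f p) t))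
          ((hdm.comp (by fun_prop : Measurable fun p : En n => (p, t))).indicator measurableSet_ball)
          (fun x => ENNReal.ofReal (wt (x, t))) ?_ ?_
        · rw [lintegral_indicator measurableSet_ball] at this
          refine this.trans (le_of_eq ?_)
          rw [← lintegral_indicator hCt]
          rfl
        · intro p hp
          by_cases hpb : p ∈ ball (0 : En n) κ
          · rw [indicator_of_mem hpb] at hp
            have : 0 < deriv (f p) t := by
              by_contra hle
              exact hp (ENNReal.ofReal_eq_zero.2 (not_lt.1 hle))
            exact hcontact p hpb t ht this
          · rw [indicator_of_notMem hpb] at hp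
            exact absurd rfl hp
        · intro x hx
          refine (indicator_le_self _ _ _).trans ?_
          exact ENNReal.ofReal_le_ofReal (hcontact2 x t ht hx)
    _ = _ := by
        refine lintegral_lintegral_swap ?_
        have hcH := hR.cH
        have hct := hR.ct
        have hm1 : Measurable (fun X : En n × ℝ => ENNReal.ofReal |(H X).det|) :=
          (ENNReal.continuous_ofReal.comp (ContinuousLinearMap.continuous_det.comp hcH).abs).measurable
        have hm2 : Measurable (fun X : En n × ℝ => ENNReal.ofReal (wt X)) := hct.measurable.ennreal_ofReal
        have hm3 := (hm1.mul hm2).indicator hCm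
        exact (hm3.comp measurable_swap).aemeasurable

lemma one_dim (V V' : ℝ → ℝ) (R : Set ℝ) (tb T : ℝ) (hR : MeasurableSet R) (hRs : R ⊆ Ioo tb T)
    (hd : ∀ t ∈ R, HasDerivAt V (V' t) t) (hneg : ∀ t ∈ R, V' t < 0)
    (h01 : ∀ t ∈ R, V t ∈ Icc (0:ℝ) 1) (hmin : ∀ t ∈ R, ∀ t' ∈ Icc tb t, V t ≤ V t') :
    ∫⁻ t in R, ENNReal.ofReal (- V' t) ≤ 1 := by
  have hinj : ∀ t1 ∈ R, ∀ t2 ∈ R, t1 < t2 → V t1 ≠ V t2 := by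
    intro t1 h1 t2 h2 hlt he
    -- V(s) ≥ V t2 = V t1 for s in [t1,t2]
    have hd1 := (hd t1 h1)
    have h3 : Filter.Tendsto (slope V t1) (nhdsWithin t1 (Ioi t1)) (nhds (V' t1)) :=
      (hasDerivAt_iff_tendsto_slope.1 hd1).mono_left (nhdsWithin_mono _ (fun s hs => ne_of_gt hs))
    have : 0 ≤ V' t1 := by
      refine ge_of_tendsto h3 ?_
      filter_upwards [Ioo_mem_nhdsGT hlt] with s hs
      rw [slope_def_field]
      have := hmin t2 h2 s ⟨(hRs h1).1.le.trans hs.1.le, hs.2.le⟩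
      exact div_nonneg (by linarith) (by linarith [hs.1])
    linarith [hneg t1 h1]
  have hinj' : InjOn V R := by
    intro t1 h1 t2 h2 he
    rcases lt_trichotomy t1 t2 with h | h | h
    · exact absurd he (hinj t1 h1 t2 h2 h)
    · exact h
    · exact absurd he.symm (hinj t2 h2 t1 h1 h)
  have := lintegral_image_eq_lintegral_abs_deriv_mul hR (fun t ht => (hd t ht).hasDerivWithinAt) hinj'
    (fun _ => 1)
  simp only [mul_one, lintegral_one, Measure.restrict_apply MeasurableSet.univ, univ_inter] at this
  calc ∫⁻ t in R, ENNReal.ofReal (- V' t) = ∫⁻ t in R, ENNReal.ofReal |V' t| :=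
        setLIntegral_congr_fun hR fun t ht => by rw [abs_of_neg (hneg t ht)]
    _ = volume (V '' R) := this.symm
    _ ≤ volume (Icc (0:ℝ) 1) := measure_mono (by rintro _ ⟨t, ht, rfl⟩; exact h01 t ht)
    _ = 1 := by simp

/-- The profile. -/
def psi (α s : ℝ) (y x : En n) : ℝ := Real.exp (-(α / s ^ 2) * ‖x - y‖ ^ 2) - Real.exp (-α)
def psiG (α s : ℝ) (y x : En n) : En n :=
  (-(2 * α / s ^ 2) * Real.exp (-(α / s ^ 2) * ‖x - y‖ ^ 2)) • (x - y)
def psiH (α s : ℝ) (y x : En n) : En n →L[ℝ] En n :=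
  (-(2 * α / s ^ 2) * Real.exp (-(α / s ^ 2) * ‖x - y‖ ^ 2)) • ContinuousLinearMap.id ℝ (En n) +
  ((4 * α ^ 2 / s ^ 4) * Real.exp (-(α / s ^ 2) * ‖x - y‖ ^ 2)) •
    (innerSL ℝ (x - y)).smulRight (x - y)

lemma exp_prof_deriv (k : ℝ) (y x : En n) :
    HasFDerivAt (fun x => Real.exp (-k * ‖x - y‖ ^ 2))
      ((-(2 * k) * Real.exp (-k * ‖x - y‖ ^ 2)) • innerSL ℝ (x - y)) x := by
  have h1 : HasFDerivAt (fun x : En n => x - y) (ContinuousLinearMap.id ℝ (En n)) x :=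
    (hasFDerivAt_id x).sub_const y
  have h2 := (h1.norm_sq.const_mul (-k)).exp
  refine h2.congr_fderiv ?_
  ext z
  simp
  ring

lemma psi_dx (α s : ℝ) (y x : En n) :
    HasFDerivAt (psi α s y) (innerSL ℝ (psiG α s y x)) x := by
  have := (exp_prof_deriv (α / s ^ 2) y x).sub_const (Real.exp (-α))
  refine this.congr_fderiv ?_
  ext z
  simp [psiG]
  left; ring

lemma psi_dxx (α s : ℝ) (y x : En n) : HasFDerivAt (psiG α s y) (psiH α s y x) x := by
  have h1 : HasFDerivAt (fun x : En n => x - y) (ContinuousLinearMap.id ℝ (En n)) x :=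
    (hasFDerivAt_id x).sub_const y
  have h2 := ((exp_prof_deriv (α / s ^ 2) y x).const_mul (-(2 * α / s ^ 2))).smul h1
  refine h2.congr_fderiv ?_
  ext z i
  simp [psiH]
  ring

lemma psi_cont (α s : ℝ) (y : En n) : Continuous (psi α s y) := by unfold psi; fun_prop
lemma psiG_cont (α s : ℝ) (y : En n) : Continuous (psiG α s y) := by unfold psiG; fun_prop
lemma psiH_cont (α s : ℝ) (y : En n) : Continuous (psiH α s y) := by
  unfold psiH
  have e1 : Continuous fun x : En n => -(2 * α / s ^ 2) * Real.exp (-(α / s ^ 2) * ‖x - y‖ ^ 2) := by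
    fun_prop
  have e2 : Continuous fun x : En n => (4 * α ^ 2 / s ^ 4) * Real.exp (-(α / s ^ 2) * ‖x - y‖ ^ 2) := by
    fun_prop
  refine Continuous.add (e1.smul continuous_const) (e2.smul ?_)
  have h1 : Continuous fun x : En n => innerSL ℝ (x - y) := (innerSL ℝ).continuous.comp (by fun_prop)
  have h2 : Continuous fun x : En n => x - y := by fun_prop
  exact ((ContinuousLinearMap.smulRightL ℝ (En n) (En n)).continuous.comp h1).clm_apply h2

lemma psiH_symm (α s : ℝ) (y x a b : En n) : ⟪psiH α s y x a, b⟫ = ⟪a, psiH α s y x b⟫ := by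
  simp only [psiH, add_apply, FunLike.coe_smul, Pi.smul_apply,
      ContinuousLinearMap.coe_id', id_eq, ContinuousLinearMap.smulRight_apply, innerSL_apply_apply,
      inner_add_left, inner_add_right, inner_smul_left, inner_smul_right, RCLike.conj_to_real]
  rw [real_inner_comm (x - y) a, real_inner_comm b (x - y)]
  ring

lemma psi_trA (α s : ℝ) (y x : En n) (A : Matrix (Fin n) (Fin n) ℝ) :
    trA A (psiH α s y x) = Real.exp (-(α / s ^ 2) * ‖x - y‖ ^ 2) *
      ((4 * α ^ 2 / s ^ 4) * (∑ i, ∑ j, A i j * (x - y) i * (x - y) j) -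
        (2 * α / s ^ 2) * ∑ i, A i i) := by
  have h : ∀ i j, ⟪psiH α s y x (ev i), ev j⟫ = Real.exp (-(α / s ^ 2) * ‖x - y‖ ^ 2) *
      ((4 * α ^ 2 / s ^ 4) * ((x - y) i * (x - y) j) - (2 * α / s ^ 2) * if i = j then 1 else 0) := by
    intro i j
    have h1 : (ev i : En n) j = if i = j then 1 else 0 := by
      simp [ev, eq_comm]
    rw [inner_ev]
    simp only [psiH, add_apply, FunLike.coe_smul, Pi.smul_apply,
      ContinuousLinearMap.coe_id', id_eq, ContinuousLinearMap.smulRight_apply, PiLp.add_apply, PiLp.smul_apply,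
      innerSL_apply_apply, inner_ev, smul_eq_mul, h1]
    ring
  unfold trA
  simp_rw [h]
  have h2 : ∑ i, ∑ j, A i j * (if i = j then (1:ℝ) else 0) = ∑ i, A i i := by simp
  rw [← h2, Finset.mul_sum, Finset.mul_sum, ← Finset.sum_sub_distrib, Finset.mul_sum]
  refine Finset.sum_congr rfl fun i _ => ?_
  rw [Finset.mul_sum, Finset.mul_sum, ← Finset.sum_sub_distrib, Finset.mul_sum]
  refine Finset.sum_congr rfl fun j _ => ?_
  ring

/-- exponent parameter -/
def alp (n : ℕ) (ν : ℝ) : ℝ := 2 * ν * (n * ν + 1)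

lemma alp_ge (n : ℕ) (ν : ℝ) (hν : 1 ≤ ν) : 2 ≤ alp n ν := by
  unfold alp
  have h : 0 ≤ (n:ℝ) * ν := by positivity
  nlinarith

lemma psi_trA_lower (ν α s : ℝ) (hν : 1 ≤ ν) (hα : 0 < α) (hs : 0 < s) (y x : En n)
    (A : Matrix (Fin n) (Fin n) ℝ) (hA : Ell ν A) :
    -(2 * α * n * ν) / s ^ 2 ≤ trA A (psiH α s y x) := by
  rw [psi_trA]
  have h1 := hA.1 (fun i => (x - y) i)
  have h0 : 0 ≤ ∑ i, ∑ j, A i j * (x - y) i * (x - y) j := by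
    refine le_trans ?_ h1
    have : 0 ≤ ∑ i, (x - y) i ^ 2 := Finset.sum_nonneg fun _ _ => sq_nonneg _
    positivity
  have h2 := ell_trace ν hν A hA
  set E := Real.exp (-(α / s ^ 2) * ‖x - y‖ ^ 2)
  have hE0 : 0 < E := Real.exp_pos _
  have hE1 : E ≤ 1 := Real.exp_le_one_iff.2 (by
    have : 0 ≤ (α / s ^ 2) * ‖x - y‖ ^ 2 := by positivity
    linarith)
  have h3 : 0 ≤ (4 * α ^ 2 / s ^ 4) * ∑ i, ∑ j, A i j * (x - y) i * (x - y) j := by positivity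
  have h4 : (2 * α / s ^ 2) * ∑ i, A i i ≤ (2 * α / s ^ 2) * (n * ν) := by gcongr
  have h5 : 0 ≤ (2 * α / s ^ 2) * (n * ν) := by positivity
  calc -(2 * α * n * ν) / s ^ 2 = -((2 * α / s ^ 2) * (n * ν)) := by ring
    _ ≤ E * (-((2 * α / s ^ 2) * (n * ν))) := by nlinarith
    _ ≤ _ := by
      refine mul_le_mul_of_nonneg_left ?_ hE0.le
      linarith

lemma psi_trA_lower2 (ν s : ℝ) (hν : 1 ≤ ν) (hs : 0 < s) (y x : En n)
    (A : Matrix (Fin n) (Fin n) ℝ) (hA : Ell ν A) (h1 : s / 2 ≤ ‖x - y‖) (h2 : ‖x - y‖ ≤ s) :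
    (alp n ν * Real.exp (-alp n ν)) / s ^ 2 ≤ trA A (psiH (alp n ν) s y x) := by
  rw [psi_trA]
  have h1' := hA.1 (fun i => (x - y) i)
  rw [← EuclideanSpace.real_norm_sq_eq] at h1'
  have h2' := ell_trace ν hν A hA
  have hα := alp_ge n ν hν
  set α := alp n ν with hαd
  set d := ‖x - y‖
  set E := Real.exp (-(α / s ^ 2) * d ^ 2)
  have hE0 : Real.exp (-α) ≤ E := by
    refine Real.exp_le_exp.2 ?_
    have : α / s ^ 2 * d ^ 2 ≤ α / s ^ 2 * s ^ 2 := by gcongr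
    rw [div_mul_cancel₀ _ (by positivity)] at this
    linarith
  have hE1 : 0 < Real.exp (-α) := Real.exp_pos _
  have h4 : (2 * α / s ^ 2) * ∑ i, A i i ≤ (2 * α / s ^ 2) * (n * ν) := by gcongr
  have h5 : (4 * α ^ 2 / s ^ 4) * (ν⁻¹ * (s / 2) ^ 2) ≤
      (4 * α ^ 2 / s ^ 4) * ∑ i, ∑ j, A i j * (x - y) i * (x - y) j := by
    refine mul_le_mul_of_nonneg_left (le_trans ?_ h1') (by positivity)
    gcongr
  have h6 : (4 * α ^ 2 / s ^ 4) * (ν⁻¹ * (s / 2) ^ 2) = (2 * α / s ^ 2) * (n * ν + 1) := by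
    have : α = 2 * ν * (n * ν + 1) := hαd
    have hν0 : ν ≠ 0 := by linarith
    field_simp
    rw [this]; ring
  have h7 : α / s ^ 2 ≤ (4 * α ^ 2 / s ^ 4) * (∑ i, ∑ j, A i j * (x - y) i * (x - y) j) -
        (2 * α / s ^ 2) * ∑ i, A i i := by
    have : 0 ≤ α / s ^ 2 := by positivity
    have : (2 * α / s ^ 2) * (n * ν + 1) = (2 * α / s ^ 2) * (n * ν) + 2 * (α / s ^ 2) := by ring
    linarith
  calc α * Real.exp (-α) / s ^ 2 = Real.exp (-α) * (α / s ^ 2) := by ring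
    _ ≤ _ := by gcongr

lemma psiG_bound (α s : ℝ) (hα : 0 < α) (hs : 0 < s) (y x : En n) (h2 : ‖x - y‖ ≤ s) :
    ‖psiG α s y x‖ ≤ 2 * α / s := by
  unfold psiG
  rw [norm_smul, norm_mul, Real.norm_eq_abs, Real.norm_eq_abs, abs_neg, abs_of_nonneg (by positivity),
    abs_of_pos (Real.exp_pos _)]
  have hE1 : Real.exp (-(α / s ^ 2) * ‖x - y‖ ^ 2) ≤ 1 := Real.exp_le_one_iff.2 (by
    have : 0 ≤ (α / s ^ 2) * ‖x - y‖ ^ 2 := by positivity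
    linarith)
  calc 2 * α / s ^ 2 * Real.exp (-(α / s ^ 2) * ‖x - y‖ ^ 2) * ‖x - y‖ ≤ 2 * α / s ^ 2 * 1 * s := by gcongr
    _ = 2 * α / s := by field_simp

lemma psi_le_one (α s : ℝ) (hα : 0 < α) (hs : 0 < s) (y x : En n) : psi α s y x ≤ 1 := by
  unfold psi
  have hE1 : Real.exp (-(α / s ^ 2) * ‖x - y‖ ^ 2) ≤ 1 := Real.exp_le_one_iff.2 (by
    have : 0 ≤ (α / s ^ 2) * ‖x - y‖ ^ 2 := by positivity
    linarith)
  have := Real.exp_pos (-α)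
  linarith

lemma psi_sphere (α s : ℝ) (hs : 0 < s) (y x : En n) (h : ‖x - y‖ = s) : psi α s y x = 0 := by
  unfold psi
  rw [h, neg_mul, div_mul_cancel₀ _ (by positivity), sub_self]

/-- lower bound of the profile in the ball of radius `3s/4` -/
def psiStar (α : ℝ) : ℝ := Real.exp (-(9 / 16 * α)) - Real.exp (-α)

lemma psiStar_pos (α : ℝ) (hα : 0 < α) : 0 < psiStar α := by
  unfold psiStar
  have : Real.exp (-α) < Real.exp (-(9 / 16 * α)) := Real.exp_lt_exp.2 (by linarith)
  linarith

lemma psiStar_le (α : ℝ) (hα : 0 < α) : psiStar α ≤ 1 := by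
  unfold psiStar
  have h1 : Real.exp (-(9 / 16 * α)) ≤ 1 := Real.exp_le_one_iff.2 (by linarith)
  have := Real.exp_pos (-α)
  linarith

lemma psi_ge (α s : ℝ) (hα : 0 < α) (hs : 0 < s) (y x : En n) (h : ‖x - y‖ ≤ 3 / 4 * s) :
    psiStar α ≤ psi α s y x := by
  unfold psi psiStar
  have : Real.exp (-(9 / 16 * α)) ≤ Real.exp (-(α / s ^ 2) * ‖x - y‖ ^ 2) := by
    refine Real.exp_le_exp.2 ?_
    have h1 : α / s ^ 2 * ‖x - y‖ ^ 2 ≤ α / s ^ 2 * (3 / 4 * s) ^ 2 := by gcongr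
    have h2 : α / s ^ 2 * (3 / 4 * s) ^ 2 = 9 / 16 * α := by field_simp; ring
    linarith
  linarith

lemma abs_det_neg (T : En n →L[ℝ] En n) : |(-T).det| = |T.det| := by
  have : (-T).det = (-1) ^ (Module.finrank ℝ (En n)) * T.det := by
    have := LinearMap.det_smul (-1 : ℝ) (T : En n →ₗ[ℝ] En n)
    rw [neg_one_smul] at this
    exact this
  rw [this, abs_mul, abs_pow]
  simp

lemma trA_add (A : Matrix (Fin n) (Fin n) ℝ) (T T' : En n →L[ℝ] En n) :
    trA A (T + T') = trA A T + trA A T' := by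
  simp [trA, inner_add_left, mul_add, Finset.sum_add_distrib]

lemma elem_ineq (n : ℕ) (ν τ w a b : ℝ) (hν : 1 ≤ ν) (hτ : 0 ≤ τ) (hw : 0 ≤ w) (ha : 0 ≤ a) (hb : 0 ≤ b)
    (h : ν⁻¹ * τ + w ≤ a + b) : τ ^ n * w ≤ 2 ^ (n + 1) * ν ^ n * (a ^ (n + 1) + w * b ^ n) := by
  have hν0 : 0 < ν := by linarith
  have h1 : τ ≤ ν * (a + b) := by
    have : ν⁻¹ * τ ≤ a + b := by linarith
    rwa [inv_mul_le_iff₀ hν0] at this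
  rcases le_total b a with hab | hab
  · have h2 : τ ≤ ν * (2 * a) := h1.trans (by gcongr; linarith)
    have h3 : w ≤ 2 * a := by
      have : 0 ≤ ν⁻¹ * τ := by positivity
      linarith
    calc τ ^ n * w ≤ (ν * (2 * a)) ^ n * (2 * a) := by gcongr
      _ = 2 ^ (n + 1) * ν ^ n * (a ^ (n + 1)) := by ring
      _ ≤ _ := by gcongr; have : 0 ≤ w * b ^ n := by positivity
                  linarith
  · have h2 : τ ≤ ν * (2 * b) := h1.trans (by gcongr; linarith)
    calc τ ^ n * w ≤ (ν * (2 * b)) ^ n * w := by gcongr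
      _ = 2 ^ n * ν ^ n * (w * b ^ n) := by ring
      _ ≤ 2 ^ (n + 1) * ν ^ n * (w * b ^ n) := by gcongr <;> norm_num
      _ ≤ _ := by gcongr; have : 0 ≤ a ^ (n + 1) := by positivity
                  linarith

/-- the test functions -/
def bw (α s : ℝ) (y : En n) (g : ℝ → ℝ) (v : En n × ℝ → ℝ) : En n × ℝ → ℝ :=
  fun X => psi α s y X.1 + g X.2 - v X
def bG (α s : ℝ) (y : En n) (G : En n × ℝ → En n) : En n × ℝ → En n :=
  fun X => psiG α s y X.1 - G X
def bH (α s : ℝ) (y : En n) (H : En n × ℝ → (En n →L[ℝ] En n)) : En n × ℝ → (En n →L[ℝ] En n) :=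
  fun X => psiH α s y X.1 - H X
def bt (g' : ℝ → ℝ) (vt : En n × ℝ → ℝ) : En n × ℝ → ℝ := fun X => g' X.2 - vt X

lemma b_reg (α s : ℝ) (y : En n) (g g' : ℝ → ℝ) (hg' : Continuous g') 
    (hg : ∀ t, HasDerivAt g (g' t) t) (v : En n × ℝ → ℝ) (G : En n × ℝ → En n)
    (H : En n × ℝ → (En n →L[ℝ] En n)) (vt : En n × ℝ → ℝ) (U : Set (En n × ℝ))
    (hR : Reg v G H vt U) : Reg (bw α s y g v) (bG α s y G) (bH α s y H) (bt g' vt) U := by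
  have hgc : Continuous g := continuous_iff_continuousAt.2 fun t => (hg t).continuousAt
  refine ⟨?_, ?_, ?_, ?_, ?_, ?_, ?_, ?_⟩
  · exact (((psi_cont α s y).comp continuous_fst).add (hgc.comp continuous_snd)).sub hR.cv
  · exact ((psiG_cont α s y).comp continuous_fst).sub hR.cG
  · exact ((psiH_cont α s y).comp continuous_fst).sub hR.cH
  · exact (hg'.comp continuous_snd).sub hR.ct
  · intro X hX
    have := ((psi_dx α s y X.1).add_const (g X.2)).sub (hR.dx X hX)
    unfold bw bG
    rw [map_sub]
    exact this
  · intro X hX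
    exact (psi_dxx α s y X.1).sub (hR.dxx X hX)
  · intro X hX
    exact ((hg X.2).const_add (psi α s y X.1)).sub (hR.dt X hX)
  · intro X hX a b
    simp only [bH, sub_apply, inner_sub_left, inner_sub_right]
    rw [psiH_symm, hR.symm X hX]

/-- Pointwise estimate at contact points. -/
lemma contact_est (ν α s tb T κ : ℝ) (hν : 1 ≤ ν) (y : En n) (g g' : ℝ → ℝ) (hg' : Continuous g') 
    (hg : ∀ t, HasDerivAt g (g' t) t) (v : En n × ℝ → ℝ) (G : En n × ℝ → En n)
    (H : En n × ℝ → (En n →L[ℝ] En n)) (vt : En n × ℝ → ℝ) (U : Set (En n × ℝ))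
    (hR : Reg v G H vt U) (hU : closedBall y s ×ˢ Ioo tb T ⊆ U)
    (x : En n) (t : ℝ) (ht : t ∈ Ioo tb T)
    (hX : (x, t) ∈ Cset (bw α s y g v) (bG α s y G) (bt g' vt) y s tb κ)
    (A : Matrix (Fin n) (Fin n) ℝ) (hA : Ell ν A) (β : ℝ) (hβ : 0 ≤ β)
    (heq : trA A (H (x, t)) ≤ vt (x, t) + β * ‖G (x, t)‖) (f1 : ℝ) (hf1 : 0 ≤ f1)
    (hf : g' t - trA A (psiH α s y x) ≤ f1) :
    |(bH α s y H (x, t)).det| * bt g' vt (x, t) ≤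
      2 ^ (n + 1) * ν ^ n * (f1 ^ (n + 1) + bt g' vt (x, t) * (β * ‖G (x, t)‖) ^ n) := by
  have hR' := b_reg α s y g g' hg' hg v G H vt U hR
  set w := bw α s y g v
  set Gw := bG α s y G
  have hxb : x ∈ ball y s := hX.1
  have hxU : (x, t) ∈ U := hU ⟨ball_subset_closedBall hxb, ht⟩
  have hmax : IsLocalMax (fun z => w (z, t) - ⟪Gw (x, t), z - y⟫) x := by
    filter_upwards [isOpen_ball.mem_nhds hxb] with z hz
    refine le_trans ?_ hX.2.2.2.2
    exact le_supF w hR'.cv y s tb (Gw (x, t)) t z (ball_subset_closedBall hz) t ⟨ht.1.le, le_rfl⟩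
  have hneg : ∀ e, ⟪bH α s y H (x, t) e, e⟫ ≤ 0 := fun e =>
    contact_hess (fun z => w (z, t)) (fun z => Gw (z, t)) _ (Gw (x, t)) x y
      (by
        filter_upwards [isOpen_ball.mem_nhds hxb] with z hz
        exact hR'.dx (z, t) (hU ⟨ball_subset_closedBall hz, ht⟩))
      (hR'.dxx (x, t) hxU) hmax e
  set N := H (x, t) - psiH α s y x with hN
  have hHN : bH α s y H (x, t) = -N := by simp [bH, hN]
  have hNs : ∀ a b, ⟪N a, b⟫ = ⟪a, N b⟫ := by
    intro a b
    have := hR'.symm (x, t) hxU a b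
    rw [hHN] at this
    simpa using this
  have hNp : ∀ a, 0 ≤ ⟪N a, a⟫ := by
    intro a
    have := hneg a
    rw [hHN] at this
    simpa using this
  obtain ⟨h1, h2, h3⟩ := linalg_main ν hν A hA N hNs hNp
  have h4 : trA A (H (x, t)) = trA A N + trA A (psiH α s y x) := by
    rw [← trA_add]; simp [hN]
  have hwt : 0 < bt g' vt (x, t) := hX.2.2.1
  have hbt : bt g' vt (x, t) = g' t - vt (x, t) := rfl
  rw [hHN, abs_det_neg]
  calc |N.det| * bt g' vt (x, t) ≤ (trI N) ^ n * bt g' vt (x, t) := by gcongr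
    _ ≤ _ := elem_ineq n ν _ _ f1 _ hν h2 hwt.le hf1 (by positivity) (by rw [hbt]; linarith)

/-- Abstract nonnegative supersolutions. -/
structure SupSol (ν S : ℝ) (y : En n) (r a s : ℝ) (v : En n × ℝ → ℝ) (G : En n × ℝ → En n)
    (H : En n × ℝ → (En n →L[ℝ] En n)) (vt : En n × ℝ → ℝ) (Bs : En n → ℝ≥0∞) : Prop where
  reg : Reg v G H vt (ball y r ×ˢ Ioo a s)
  nonneg : ∀ X ∈ closedBall y r ×ˢ Icc a s, 0 ≤ v X
  eq : ∀ x ∈ ball y r, ∀ᵐ t ∂(volume.restrict (Ioo a s)), ∃ A, Ell ν A ∧ ∃ β : NNReal,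
    (β : ℝ≥0∞) ≤ Bs x ∧ trA A (H (x, t)) ≤ vt (x, t) + β * ‖G (x, t)‖
  hB : ∫⁻ x in ball y r, Bs x ^ n ≤ ENNReal.ofReal S

lemma sep_sum (n N : ℕ) (J : Finset ℕ) (hJ : J ⊆ Finset.range N) (a : ℕ → ℝ) (η K : ℝ) (hη : 0 ≤ η)
    (hK : 0 ≤ K)
    (ha : ∀ j ∈ J, 0 ≤ a j) (haK : ∀ j ∈ J, a j ≤ K) (hsep : ∀ j ∈ J, ∀ k ∈ J, j ≠ k → a j ≤ η ∨ a k ≤ η) :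
    ∑ j ∈ J, a j ^ n ≤ N * η ^ n + K ^ n := by
  have hcard : (J.card : ℝ) ≤ N := by
    have := Finset.card_le_card hJ
    rw [Finset.card_range] at this
    exact_mod_cast this
  have hb : ∀ J' ⊆ J, (∀ j ∈ J', a j ≤ η) → ∑ j ∈ J', a j ^ n ≤ N * η ^ n := by
    intro J' hJ' h
    calc ∑ j ∈ J', a j ^ n ≤ ∑ j ∈ J', η ^ n :=
          Finset.sum_le_sum fun j hj => pow_le_pow_left₀ (ha j (hJ' hj)) (h j hj) n
      _ = J'.card * η ^ n := by simp
      _ ≤ _ := by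
        gcongr
        exact_mod_cast (Nat.cast_le.2 (Finset.card_le_card hJ')).trans hcard
  by_cases h : ∃ j0 ∈ J, η < a j0
  · obtain ⟨j0, hj0, hlt⟩ := h
    rw [← Finset.sum_erase_add J _ hj0]
    refine add_le_add (hb _ (Finset.erase_subset _ _) ?_) (pow_le_pow_left₀ (ha j0 hj0) (haK j0 hj0) n)
    intro j hj
    rw [Finset.mem_erase] at hj
    rcases hsep j hj.2 j0 hj0 hj.1 with h | h
    · exact h
    · linarith
  · push Not at h
    have := hb J subset_rfl h
    have : 0 ≤ K ^ n := by positivity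
    linarith

set_option maxHeartbeats 400000 in
lemma per_x (ν S : ℝ) (hν : 1 ≤ ν) (y : En n) (r a s : ℝ) (v : En n × ℝ → ℝ) (G : En n × ℝ → En n)
    (H : En n × ℝ → (En n →L[ℝ] En n)) (vt : En n × ℝ → ℝ) (Bs : En n → ℝ≥0∞)
    (hS : SupSol ν S y r a s v G H vt Bs) (α : ℝ) (hα : 0 < α) (g g' : ℝ → ℝ) (hg' : Continuous g')
    (hg : ∀ t, HasDerivAt g (g' t) t) (tb T m : ℝ) (htb : a ≤ tb) (hT : T ≤ s)
    (hg0 : ∀ t ∈ Icc tb T, g t ≤ 0)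
    (N : ℕ) (sj : ℕ → ℝ) (yj : ℕ → En n) (hsj : ∀ j < N, 0 < sj j)
    (hsub : ∀ j < N, closedBall (yj j) (sj j) ⊆ ball y r)
    (Kg η : ℝ) (hη : 0 ≤ η) (hKg : 2 * α + m / 4 ≤ Kg) (hKg0 : 0 < Kg)
    (hsep : ∀ j k, j < k → k < N → sj k * Kg ≤ η * sj j)
    (As : Set (En n × ℝ)) (hAs : MeasurableSet As) (D P1 : ℝ) (hD : 0 ≤ D) (hP1 : 0 ≤ P1)
    (hP : ∀ j < N, 2 ^ (n + 1) * ν ^ n * (sj j ^ n * (D / sj j ^ 2) ^ (n + 1)) ≤ P1)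
    (hA1 : ∀ j < N, ∀ x ∈ ball (yj j) (sj j), ∀ t ∈ Ioo tb T, 0 < bw α (sj j) (yj j) g v (x, t) →
      (x, t) ∈ As → ∀ A, Ell ν A → g' t - trA A (psiH α (sj j) (yj j) x) ≤ D / sj j ^ 2)
    (hA2 : ∀ j < N, ∀ x ∈ ball (yj j) (sj j), ∀ t ∈ Ioo tb T, 0 < bw α (sj j) (yj j) g v (x, t) →
      (x, t) ∉ As → ∀ A, Ell ν A → g' t - trA A (psiH α (sj j) (yj j) x) ≤ 0) (x : En n) :
    ∑ j ∈ Finset.range N, ENNReal.ofReal (sj j ^ n) * ∫⁻ t in Ioo tb T,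
      (Cset (bw α (sj j) (yj j) g v) (bG α (sj j) (yj j) G) (bt g' vt) (yj j) (sj j) tb
        (m / (4 * sj j))).indicator
        (fun X => ENNReal.ofReal |(bH α (sj j) (yj j) H X).det| * ENNReal.ofReal (bt g' vt X)) (x, t) ≤
      (∫⁻ t in Ioo tb T, As.indicator (fun _ => ENNReal.ofReal (N * P1)) (x, t)) +
      (ball y r).indicator (fun x => ENNReal.ofReal (2 ^ (n + 1) * ν ^ n * (N * η ^ n + Kg ^ n)) * Bs x ^ n) x := by
  classical
  have hR' : ∀ j, Reg (bw α (sj j) (yj j) g v) (bG α (sj j) (yj j) G) (bH α (sj j) (yj j) H) (bt g' vt) _ :=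
    fun j => b_reg α (sj j) (yj j) g g' hg' hg v G H vt _ hS.reg
  set C : ℕ → Set (En n × ℝ) := fun j => Cset (bw α (sj j) (yj j) g v) (bG α (sj j) (yj j) G) (bt g' vt)
    (yj j) (sj j) tb (m / (4 * sj j)) with hC
  have hCm : ∀ j, MeasurableSet (C j) := fun j => Cset_meas _ _ _ _ _ _ _ (hR' j).cv (hR' j).cG (hR' j).ct
  have hCb : ∀ j, ∀ X ∈ C j, X.1 ∈ ball (yj j) (sj j) := fun j X hX => hX.1
  by_cases hx : x ∈ ball y r
  swap
  · refine le_trans (le_of_eq ?_) zero_le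
    refine Finset.sum_eq_zero fun j hj => ?_
    have hj' := Finset.mem_range.1 hj
    have : ∀ t, (C j).indicator (fun X => ENNReal.ofReal |(bH α (sj j) (yj j) H X).det| *
        ENNReal.ofReal (bt g' vt X)) (x, t) = 0 := fun t =>
      indicator_of_notMem (fun h => hx (hsub j hj' (ball_subset_closedBall (hCb j (x, t) h : x ∈ ball (yj j) (sj j))))) _
    simp only [hC] at this
    simp [this]
  rw [indicator_of_mem hx]
  have hU : ∀ j < N, closedBall (yj j) (sj j) ×ˢ Ioo tb T ⊆ ball y r ×ˢ Ioo a s := fun j hj =>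
    prod_mono (hsub j hj) (Ioo_subset_Ioo htb hT)
  set R : Set ℝ := Ioo tb T ∩ {t | ∃ j < N, (x, t) ∈ C j} with hR
  have hRm : MeasurableSet R := by
    have : {t | ∃ j < N, (x, t) ∈ C j} = ⋃ j ∈ Finset.range N, (fun t => (x, t)) ⁻¹' (C j) := by
      ext t; simp
    rw [hR, this]
    refine measurableSet_Ioo.inter (Finset.measurableSet_biUnion _ fun j _ => ?_)
    exact (by fun_prop : Measurable fun t : ℝ => (x, t)) (hCm j)
  -- facts on contact points
  have hIcc : ∀ t ∈ Ioo tb T, t ∈ Icc a s := fun t ht => ⟨htb.trans ht.1.le, ht.2.le.trans hT⟩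
  have hR1 : ∫⁻ t in R, ENNReal.ofReal (bt g' vt (x, t)) ≤ 1 := by
    have := one_dim (fun t => v (x, t) - g t) (fun t => vt (x, t) - g' t) R tb T hRm inter_subset_left
      (fun t ht => (hS.reg.dt (x, t) ⟨hx, Ioo_subset_Ioo htb hT ht.1⟩).sub (hg t)) ?_ ?_ ?_
    · simpa [bt] using this
    · rintro t ⟨ht, j, hj, hX⟩
      have : 0 < g' t - vt (x, t) := hX.2.2.1
      linarith
    · rintro t ⟨ht, j, hj, hX⟩
      have h1 : 0 < psi α (sj j) (yj j) x + g t - v (x, t) := hX.2.2.2.1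
      have h2 := psi_le_one α (sj j) hα (hsj j hj) (yj j) x
      have h3 := hS.nonneg (x, t) ⟨ball_subset_closedBall hx, hIcc t ht⟩
      have h4 := hg0 t ⟨ht.1.le, ht.2.le⟩
      constructor
      · linarith
      · linarith
    · rintro t ⟨ht, j, hj, hX⟩ t' ht'
      have h1 := le_supF _ (hR' j).cv (yj j) (sj j) tb (bG α (sj j) (yj j) G (x, t)) t x
        (ball_subset_closedBall hX.1) t' ht'
      have h2 := h1.trans hX.2.2.2.2
      simp only [bw] at h2
      linarith
  have hgrad : ∀ j < N, ∀ t, (x, t) ∈ C j → sj j * ‖G (x, t)‖ ≤ Kg := by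
    intro j hj t hX
    have h1 : ‖psiG α (sj j) (yj j) x - G (x, t)‖ < m / (4 * sj j) := hX.2.1
    have h2 := psiG_bound α (sj j) hα (hsj j hj) (yj j) x (by
      have := mem_ball.1 hX.1
      rw [dist_eq_norm] at this; exact this.le)
    have h3 : ‖G (x, t)‖ ≤ 2 * α / sj j + m / (4 * sj j) := by
      calc ‖G (x, t)‖ = ‖psiG α (sj j) (yj j) x - (psiG α (sj j) (yj j) x - G (x, t))‖ := by congr 1; abel
        _ ≤ _ := (norm_sub_le _ _).trans (add_le_add h2 h1.le)
    have hp := hsj j hj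
    calc sj j * ‖G (x, t)‖ ≤ sj j * (2 * α / sj j + m / (4 * sj j)) := by gcongr
      _ = 2 * α + m / 4 := by field_simp
      _ ≤ _ := hKg
  set C3 : ℝ := 2 ^ (n + 1) * ν ^ n with hC3
  have hC30 : 0 ≤ C3 := by positivity
  set q : ℝ := N * η ^ n + Kg ^ n with hq
  have hq0 : 0 ≤ q := by positivity
  have key : ∀ᵐ t ∂(volume.restrict (Ioo tb T)),
      ∑ j ∈ Finset.range N, ENNReal.ofReal (sj j ^ n) * (C j).indicator
        (fun X => ENNReal.ofReal |(bH α (sj j) (yj j) H X).det| * ENNReal.ofReal (bt g' vt X)) (x, t) ≤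
      As.indicator (fun _ => ENNReal.ofReal (N * P1)) (x, t) +
      (ENNReal.ofReal (C3 * q) * Bs x ^ n) * R.indicator (fun t => ENNReal.ofReal (bt g' vt (x, t))) t := by
    have h1 := ae_mono (Measure.restrict_mono (Ioo_subset_Ioo htb hT) (le_refl volume)) (hS.eq x hx)
    filter_upwards [h1, ae_restrict_mem measurableSet_Ioo] with t ⟨A, hA, β, hβ, heq⟩ ht
    set J := (Finset.range N).filter (fun j => (x, t) ∈ C j) with hJ
    have hsum : ∑ j ∈ Finset.range N, ENNReal.ofReal (sj j ^ n) * (C j).indicator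
        (fun X => ENNReal.ofReal |(bH α (sj j) (yj j) H X).det| * ENNReal.ofReal (bt g' vt X)) (x, t) =
        ∑ j ∈ J, ENNReal.ofReal (sj j ^ n * (|(bH α (sj j) (yj j) H (x, t)).det| * bt g' vt (x, t))) := by
      rw [hJ, Finset.sum_filter]
      refine Finset.sum_congr rfl fun j hj => ?_
      split_ifs with h
      · rw [indicator_of_mem h, ENNReal.ofReal_mul (pow_nonneg (hsj j (Finset.mem_range.1 hj)).le n),
          ENNReal.ofReal_mul (abs_nonneg _)]
      · rw [indicator_of_notMem h, mul_zero]
    rw [hsum]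
    by_cases hJe : J = ∅
    · rw [hJe]; simp
    obtain ⟨j0, hj0⟩ := Finset.nonempty_iff_ne_empty.2 hJe
    have hj0' := Finset.mem_filter.1 hj0
    have hwt : 0 < bt g' vt (x, t) := hj0'.2.2.2.1
    have htR : t ∈ R := ⟨ht, j0, Finset.mem_range.1 hj0'.1, hj0'.2⟩
    rw [indicator_of_mem htR, ← ENNReal.ofReal_sum_of_nonneg (fun j hj => by
      have := hsj j (Finset.mem_range.1 (Finset.mem_filter.1 hj).1)
      positivity)]
    set I : ℝ := if (x, t) ∈ As then 1 else 0 with hI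
    have hI0 : 0 ≤ I := by rw [hI]; split_ifs <;> norm_num
    have hterm : ∀ j ∈ J, sj j ^ n * (|(bH α (sj j) (yj j) H (x, t)).det| * bt g' vt (x, t)) ≤
        P1 * I + C3 * bt g' vt (x, t) * (β : ℝ) ^ n * (sj j * ‖G (x, t)‖) ^ n := by
      intro j hj
      have hj' := Finset.mem_filter.1 hj
      have hjN := Finset.mem_range.1 hj'.1
      have hp := hsj j hjN
      have h := contact_est ν α (sj j) tb T _ hν (yj j) g g' hg' hg v G H vt _ hS.reg (hU j hjN) x t ht hj'.2
        A hA β β.2 heq (D / sj j ^ 2 * I) (by positivity) (by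
          by_cases hXA : (x, t) ∈ As
          · rw [hI, if_pos hXA, mul_one]
            exact hA1 j hjN x hj'.2.1 t ht hj'.2.2.2.2.1 hXA A hA
          · rw [hI, if_neg hXA, mul_zero]
            exact hA2 j hjN x hj'.2.1 t ht hj'.2.2.2.2.1 hXA A hA)
      have hIp : I ^ (n + 1) = I := by rw [hI]; split_ifs <;> simp
      calc _ ≤ sj j ^ n * (C3 * ((D / sj j ^ 2 * I) ^ (n + 1) + bt g' vt (x, t) * (β * ‖G (x, t)‖) ^ n)) := by
            gcongr
        _ = C3 * (sj j ^ n * (D / sj j ^ 2) ^ (n + 1)) * I +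
            C3 * bt g' vt (x, t) * (β : ℝ) ^ n * (sj j * ‖G (x, t)‖) ^ n := by
            rw [mul_pow (D / sj j ^ 2), hIp]; ring
        _ ≤ _ := by gcongr; exact hP j hjN
    have hss := sep_sum n N J (Finset.filter_subset _ _) (fun j => sj j * ‖G (x, t)‖) η Kg hη hKg0.le
      (fun j hj => by
        have := hsj j (Finset.mem_range.1 (Finset.mem_filter.1 hj).1)
        positivity)
      (fun j hj => hgrad j (Finset.mem_range.1 (Finset.mem_filter.1 hj).1) t (Finset.mem_filter.1 hj).2)
      (by
        have aux : ∀ j ∈ J, ∀ k ∈ J, j < k → sj k * ‖G (x, t)‖ ≤ η := by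
          intro j hj k hk hjk
          have hj' := Finset.mem_filter.1 hj
          have hk' := Finset.mem_filter.1 hk
          have h1 := hsep j k hjk (Finset.mem_range.1 hk'.1)
          have h2 := hgrad j (Finset.mem_range.1 hj'.1) t hj'.2
          have h3 : sj k * ‖G (x, t)‖ * Kg ≤ η * Kg := by
            calc sj k * ‖G (x, t)‖ * Kg = (sj k * Kg) * ‖G (x, t)‖ := by ring
              _ ≤ (η * sj j) * ‖G (x, t)‖ := by gcongr
              _ = η * (sj j * ‖G (x, t)‖) := by ring
              _ ≤ _ := by gcongr
          exact le_of_mul_le_mul_right h3 hKg0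
        intro j hj k hk hjk
        rcases lt_or_gt_of_ne hjk with h | h
        · exact Or.inr (aux j hj k hk h)
        · exact Or.inl (aux k hk j hj h))
    have hJc : (J.card : ℝ) ≤ N := by
      have := Finset.card_le_card (Finset.filter_subset (fun j => (x, t) ∈ C j) (Finset.range N))
      rw [Finset.card_range] at this
      exact_mod_cast this
    have hfin : ∑ j ∈ J, sj j ^ n * (|(bH α (sj j) (yj j) H (x, t)).det| * bt g' vt (x, t)) ≤
        N * P1 * I + C3 * q * (β : ℝ) ^ n * bt g' vt (x, t) := by
      refine (Finset.sum_le_sum hterm).trans ?_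
      rw [Finset.sum_add_distrib, Finset.sum_const, nsmul_eq_mul, ← Finset.mul_sum]
      have e1 : (J.card : ℝ) * (P1 * I) ≤ N * (P1 * I) := by gcongr
      have e2 : C3 * bt g' vt (x, t) * (β : ℝ) ^ n * ∑ j ∈ J, (sj j * ‖G (x, t)‖) ^ n ≤
          C3 * bt g' vt (x, t) * (β : ℝ) ^ n * q := by gcongr
      linarith
    refine (ENNReal.ofReal_le_ofReal hfin).trans ?_
    rw [ENNReal.ofReal_add (by positivity) (by positivity)]
    refine add_le_add ?_ ?_
    · by_cases hXA : (x, t) ∈ As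
      · rw [hI, if_pos hXA, mul_one, indicator_of_mem hXA]
      · rw [hI, if_neg hXA, mul_zero, ENNReal.ofReal_zero]; exact zero_le
    · rw [ENNReal.ofReal_mul (by positivity), ENNReal.ofReal_mul (by positivity),
        ENNReal.ofReal_pow (NNReal.coe_nonneg β), ENNReal.ofReal_coe_nnreal]
      gcongr
  calc _ = ∫⁻ t in Ioo tb T, ∑ j ∈ Finset.range N, ENNReal.ofReal (sj j ^ n) * (C j).indicator
        (fun X => ENNReal.ofReal |(bH α (sj j) (yj j) H X).det| * ENNReal.ofReal (bt g' vt X)) (x, t) := by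
        have hmj : ∀ j, Measurable fun t => (C j).indicator
          (fun X => ENNReal.ofReal |(bH α (sj j) (yj j) H X).det| * ENNReal.ofReal (bt g' vt X)) (x, t) := by
          intro j
          have hm1 : Measurable (fun X : En n × ℝ => ENNReal.ofReal |(bH α (sj j) (yj j) H X).det|) :=
            (ENNReal.continuous_ofReal.comp
              (ContinuousLinearMap.continuous_det.comp (hR' j).cH).abs).measurable
          have hm2 : Measurable (fun X : En n × ℝ => ENNReal.ofReal (bt g' vt X)) :=
            (hR' j).ct.measurable.ennreal_ofReal
          exact ((hm1.mul hm2).indicator (hCm j)).comp (by fun_prop : Measurable fun t : ℝ => (x, t))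
        rw [lintegral_finsetSum _ (fun j _ => (hmj j).const_mul _)]
        refine Finset.sum_congr rfl fun j _ => ?_
        rw [lintegral_const_mul _ (hmj j)]
    _ ≤ ∫⁻ t in Ioo tb T, (As.indicator (fun _ => ENNReal.ofReal (N * P1)) (x, t) +
      (ENNReal.ofReal (C3 * q) * Bs x ^ n) * R.indicator (fun t => ENNReal.ofReal (bt g' vt (x, t))) t) :=
        lintegral_mono_ae key
    _ ≤ _ := by
      have hm1 : Measurable fun t : ℝ => As.indicator (fun _ => ENNReal.ofReal (N * P1)) (x, t) :=
        ((measurable_const (a := ENNReal.ofReal (N * P1))).indicator hAs).comp (by fun_prop : Measurable fun t : ℝ => (x, t))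
      have hm2 : Measurable fun t : ℝ => ENNReal.ofReal (bt g' vt (x, t)) :=
        ((hR' 0).ct.measurable.ennreal_ofReal).comp (by fun_prop : Measurable fun t : ℝ => (x, t))
      rw [lintegral_add_left hm1, lintegral_const_mul _ (hm2.indicator hRm),
        lintegral_indicator hRm, Measure.restrict_restrict hRm,
        inter_eq_self_of_subset_left (inter_subset_left : R ⊆ Ioo tb T)]
      refine add_le_add le_rfl ?_
      exact (mul_le_mul_right hR1 _).trans_eq (mul_one _)

/-- volume of the unit ball -/
def omg (n : ℕ) : ℝ := (volume (ball (0 : En n) 1)).toReal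

lemma omg_pos : 0 < omg n :=
  ENNReal.toReal_pos (measure_ball_pos _ _ one_pos).ne' measure_ball_lt_top.ne

lemma vol_ball (x : En n) (ρ : ℝ) (hρ : 0 < ρ) : volume (ball x ρ) = ENNReal.ofReal (ρ ^ n * omg n) := by
  rw [Measure.addHaar_ball_of_pos _ _ hρ, ENNReal.ofReal_mul (by positivity), omg,
    ENNReal.ofReal_toReal measure_ball_lt_top.ne]
  simp

lemma sum_est (ν S : ℝ) (hν : 1 ≤ ν) (y : En n) (r a s : ℝ) (v : En n × ℝ → ℝ) (G : En n × ℝ → En n)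
    (H : En n × ℝ → (En n →L[ℝ] En n)) (vt : En n × ℝ → ℝ) (Bs : En n → ℝ≥0∞)
    (hS : SupSol ν S y r a s v G H vt Bs) (α : ℝ) (hα : 0 < α) (g g' : ℝ → ℝ) (hg' : Continuous g')
    (hg : ∀ t, HasDerivAt g (g' t) t) (tb T m : ℝ) (htb : a ≤ tb) (hT : T ≤ s) (hm : 0 < m) (htT : tb < T)
    (hg0 : ∀ t ∈ Icc tb T, g t ≤ 0) (hg1 : g tb ≤ -1)
    (N : ℕ) (sj : ℕ → ℝ) (yj : ℕ → En n) (hsj : ∀ j < N, 0 < sj j)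
    (hsub : ∀ j < N, closedBall (yj j) (sj j) ⊆ ball y r)
    (Kg η : ℝ) (hη : 0 ≤ η) (hKg : 2 * α + m / 4 ≤ Kg) (hKg0 : 0 < Kg)
    (hsep : ∀ j k, j < k → k < N → sj k * Kg ≤ η * sj j)
    (As : Set (En n × ℝ)) (hAs : MeasurableSet As) (D P1 : ℝ) (hD : 0 ≤ D) (hP1 : 0 ≤ P1)
    (hP : ∀ j < N, 2 ^ (n + 1) * ν ^ n * (sj j ^ n * (D / sj j ^ 2) ^ (n + 1)) ≤ P1)
    (hA1 : ∀ j < N, ∀ x ∈ ball (yj j) (sj j), ∀ t ∈ Ioo tb T, 0 < bw α (sj j) (yj j) g v (x, t) →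
      (x, t) ∈ As → ∀ A, Ell ν A → g' t - trA A (psiH α (sj j) (yj j) x) ≤ D / sj j ^ 2)
    (hA2 : ∀ j < N, ∀ x ∈ ball (yj j) (sj j), ∀ t ∈ Ioo tb T, 0 < bw α (sj j) (yj j) g v (x, t) →
      (x, t) ∉ As → ∀ A, Ell ν A → g' t - trA A (psiH α (sj j) (yj j) x) ≤ 0)
    (x0 : En n) (hx0 : ∀ j < N, x0 ∈ closedBall (yj j) (sj j))
    (hw0 : ∀ j < N, m ≤ bw α (sj j) (yj j) g v (x0, T)) :
    ENNReal.ofReal (N * (m / 2 * (m / 4) ^ n * omg n)) ≤ ENNReal.ofReal (N * P1) * volume As +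
      ENNReal.ofReal (2 ^ (n + 1) * ν ^ n * (N * η ^ n + Kg ^ n)) * ENNReal.ofReal S := by
  have hom := omg_pos (n := n)
  have hR' : ∀ j, Reg (bw α (sj j) (yj j) g v) (bG α (sj j) (yj j) G) (bH α (sj j) (yj j) H) (bt g' vt) _ :=
    fun j => b_reg α (sj j) (yj j) g g' hg' hg v G H vt _ hS.reg
  have hIcc : ∀ t ∈ Icc tb T, t ∈ Icc a s := fun t ht => ⟨htb.trans ht.1, ht.2.trans hT⟩
  have hcore : ∀ j < N, ENNReal.ofReal (m / 2 * (m / 4) ^ n * omg n) ≤ ∫⁻ x, ENNReal.ofReal (sj j ^ n) * ∫⁻ t in Ioo tb T,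
      (Cset (bw α (sj j) (yj j) g v) (bG α (sj j) (yj j) G) (bt g' vt) (yj j) (sj j) tb
        (m / (4 * sj j))).indicator
        (fun X => ENNReal.ofReal |(bH α (sj j) (yj j) H X).det| * ENNReal.ofReal (bt g' vt X)) (x, t) := by
    intro j hj
    have hp := hsj j hj
    have h := abp_core _ _ _ _ _ (hR' j) (yj j) (sj j) tb T m hp htT hm
      (prod_mono (hsub j hj) (Ioo_subset_Ioo htb hT)) (by
        intro x hx
        have h1 := psi_le_one α (sj j) hα hp (yj j) x
        have h2 := hS.nonneg (x, tb) ⟨ball_subset_closedBall (hsub j hj hx), hIcc tb ⟨le_rfl, htT.le⟩⟩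
        simp only [bw]
        linarith) (by
        intro x hx t ht
        have h1 := psi_sphere α (sj j) hp (yj j) x (by rwa [mem_sphere, dist_eq_norm] at hx)
        have h2 := hS.nonneg (x, t) ⟨ball_subset_closedBall (hsub j hj (sphere_subset_closedBall hx)), hIcc t ht⟩
        have h3 := hg0 t ht
        simp only [bw]
        linarith) x0 (hx0 j hj) (hw0 j hj)
    rw [lintegral_const_mul' _ _ ENNReal.ofReal_ne_top]
    refine le_trans ?_ (mul_le_mul_right h _)
    rw [vol_ball _ _ (by positivity), ← ENNReal.ofReal_mul (by positivity), ← ENNReal.ofReal_mul (by positivity)]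
    refine ENNReal.ofReal_le_ofReal (le_of_eq ?_)
    rw [div_pow, div_pow, mul_pow]
    field_simp
  have hsum : ENNReal.ofReal (N * (m / 2 * (m / 4) ^ n * omg n)) ≤
      ∑ j ∈ Finset.range N, ∫⁻ x, ENNReal.ofReal (sj j ^ n) * ∫⁻ t in Ioo tb T,
      (Cset (bw α (sj j) (yj j) g v) (bG α (sj j) (yj j) G) (bt g' vt) (yj j) (sj j) tb
        (m / (4 * sj j))).indicator
        (fun X => ENNReal.ofReal |(bH α (sj j) (yj j) H X).det| * ENNReal.ofReal (bt g' vt X)) (x, t) := by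
    refine le_trans ?_ (Finset.sum_le_sum fun j hj => hcore j (Finset.mem_range.1 hj))
    rw [Finset.sum_const, Finset.card_range, nsmul_eq_mul, ENNReal.ofReal_mul (Nat.cast_nonneg _), ENNReal.ofReal_natCast]
  refine hsum.trans ?_
  have hAm : Measurable (As.indicator (fun _ => ENNReal.ofReal (N * P1))) := measurable_const.indicator hAs
  have hAm1 : Measurable fun x : En n => ∫⁻ t in Ioo tb T, As.indicator (fun _ => ENNReal.ofReal (N * P1)) (x, t) :=
    hAm.lintegral_prod_right'
  rw [← lintegral_finsetSum]
  swap
  · intro j _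
    refine Measurable.const_mul ?_ _
    have hm1 : Measurable (fun X : En n × ℝ => ENNReal.ofReal |(bH α (sj j) (yj j) H X).det|) :=
      (ENNReal.continuous_ofReal.comp
        (ContinuousLinearMap.continuous_det.comp (hR' j).cH).abs).measurable
    have hm2 : Measurable (fun X : En n × ℝ => ENNReal.ofReal (bt g' vt X)) :=
      (hR' j).ct.measurable.ennreal_ofReal
    exact ((hm1.mul hm2).indicator (Cset_meas _ _ _ _ _ _ _ (hR' j).cv (hR' j).cG (hR' j).ct)).lintegral_prod_right'
  refine (lintegral_mono (per_x ν S hν y r a s v G H vt Bs hS α hα g g' hg' hg tb T m htb hT hg0 N sj yj hsj hsub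
    Kg η hη hKg hKg0 hsep As hAs D P1 hD hP1 hP hA1 hA2)).trans ?_
  rw [lintegral_add_left hAm1, lintegral_indicator measurableSet_ball,
    lintegral_const_mul' _ _ ENNReal.ofReal_ne_top]
  refine add_le_add ?_ (mul_le_mul_right hS.hB _)
  calc _ ≤ ∫⁻ x, ∫⁻ t, As.indicator (fun _ => ENNReal.ofReal (N * P1)) (x, t) :=
        lintegral_mono fun x => setLIntegral_le_lintegral _ _
    _ = ∫⁻ X, As.indicator (fun _ => ENNReal.ofReal (N * P1)) X := (lintegral_prod _ hAm.aemeasurable).symm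
    _ = _ := by rw [lintegral_indicator hAs, lintegral_const, Measure.restrict_apply_univ]

/-- nonnegative supersolution, data hidden -/
def SS (ν S : ℝ) (y : En n) (r a s : ℝ) (v : En n × ℝ → ℝ) : Prop :=
  ∃ G H vt Bs, SupSol ν S y r a s v G H vt Bs

lemma trA_smul (A : Matrix (Fin n) (Fin n) ℝ) (c : ℝ) (T : En n →L[ℝ] En n) :
    trA A (c • T) = c * trA A T := by
  simp only [trA, FunLike.coe_smul, Pi.smul_apply, inner_smul_left, RCLike.conj_to_real, Finset.mul_sum]
  refine Finset.sum_congr rfl fun i _ => Finset.sum_congr rfl fun j _ => by ring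

lemma SS.scale {ν S : ℝ} {y : En n} {r a s : ℝ} {v : En n × ℝ → ℝ} (h : SS ν S y r a s v) (c : ℝ) (hc : 0 < c) :
    SS ν S y r a s (fun X => c * v X) := by
  obtain ⟨G, H, vt, Bs, h⟩ := h
  refine ⟨fun X => c • G X, fun X => c • H X, fun X => c * vt X, Bs, ⟨?_, ?_, ?_, h.hB⟩⟩
  · have hR := h.reg
    refine ⟨continuous_const.mul hR.cv, hR.cG.const_smul c, hR.cH.const_smul c, continuous_const.mul hR.ct, ?_, ?_, ?_, ?_⟩
    · intro X hX
      have := (hR.dx X hX).const_mul c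
      rw [map_smul]
      exact this
    · intro X hX
      exact (hR.dxx X hX).const_smul c
    · intro X hX
      exact (hR.dt X hX).const_mul c
    · intro X hX a b
      simp only [FunLike.coe_smul, Pi.smul_apply, inner_smul_left, inner_smul_right, hR.symm X hX a b]
      rfl
  · intro X hX
    exact mul_nonneg hc.le (h.nonneg X hX)
  · intro x hx
    filter_upwards [h.eq x hx] with t ⟨A, hA, β, hβ, he⟩
    refine ⟨A, hA, β, hβ, ?_⟩
    rw [trA_smul, norm_smul, Real.norm_eq_abs, abs_of_pos hc]
    calc c * trA A (H (x, t)) ≤ c * (vt (x, t) + β * ‖G (x, t)‖) := by gcongr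
      _ = _ := by ring

lemma SS.cont {ν S : ℝ} {y : En n} {r a s : ℝ} {v : En n × ℝ → ℝ} (h : SS ν S y r a s v) : Continuous v := by
  obtain ⟨G, H, vt, Bs, h⟩ := h
  exact h.reg.cv

lemma SS.nonneg {ν S : ℝ} {y : En n} {r a s : ℝ} {v : En n × ℝ → ℝ} (h : SS ν S y r a s v) :
    ∀ X ∈ closedBall y r ×ˢ Icc a s, 0 ≤ v X := by
  obtain ⟨G, H, vt, Bs, h⟩ := h
  exact h.nonneg

set_option maxHeartbeats 800000 in
lemma uml_one (n : ℕ) (hn : 0 < n) (ν S : ℝ) (hν : 1 ≤ ν) :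
    ∃ ε θ c : ℝ, 0 < ε ∧ 0 < θ ∧ θ ≤ 1 ∧ 0 < c ∧ c ≤ 1 ∧
    ∀ (y : En n) (r a s : ℝ) (v : En n × ℝ → ℝ), SS ν S y r a s v →
    ∀ (z : En n) (ρ t0 T : ℝ), 0 < ρ → closedBall z (2 * ρ) ⊆ ball y r → a ≤ t0 - ρ ^ 2 → t0 ≤ T →
    T ≤ t0 + θ * ρ ^ 2 → T ≤ s →
    volume ({X | v X < 1} ∩ ball z ρ ×ˢ Ioo (t0 - ρ ^ 2) t0) ≤ ENNReal.ofReal (ε * ρ ^ (n + 2)) →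
    ∀ x0, dist x0 z ≤ (1 + θ) * ρ → c ≤ v (x0, T) := by
  set α := alp n ν with hαd
  have hα2 : 2 ≤ α := alp_ge n ν hν
  have hα : 0 < α := by linarith
  set c0 := α * Real.exp (-α) with hc0
  have hc00 : 0 < c0 := by positivity
  set D := 2 * α * n * ν + 1 with hD
  have hν0 : 0 < ν := by linarith
  have hD1 : 1 ≤ D := by
    have : 0 ≤ 2 * α * n * ν := by positivity
    linarith
  have hD0 : 0 < D := by linarith
  set ps := psiStar α with hps
  have hps0 : 0 < ps := psiStar_pos α hα
  have hps1 : ps ≤ 1 := psiStar_le α hα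
  set m := ps / 4 with hm
  have hm0 : 0 < m := by positivity
  set K := ps / 16 with hK
  have hK0 : 0 < K := by positivity
  set Kg := 2 * α + 1 with hKg
  have hKg0 : 0 < Kg := by positivity
  have hom := omg_pos (n := n)
  set c1 := m / 2 * (m / 4) ^ n * omg n with hc1
  have hc10 : 0 < c1 := by positivity
  set C3 : ℝ := 2 ^ (n + 1) * ν ^ n with hC3
  have hC30 : 0 < C3 := by positivity
  set Sp := max S 0 with hSp
  have hSp0 : 0 ≤ Sp := le_max_right _ _
  -- eta
  obtain ⟨η, hη0, hη⟩ : ∃ η : ℝ, 0 < η ∧ C3 * η ^ n * Sp ≤ c1 / 4 := by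
    refine ⟨min 1 (c1 / (4 * (C3 * Sp + 1))), by positivity, ?_⟩
    set η := min 1 (c1 / (4 * (C3 * Sp + 1)))
    have h1 : η ≤ 1 := min_le_left _ _
    have h0 : 0 < η := by positivity
    have h2 : η ^ n ≤ η := pow_le_of_le_one h0.le h1 hn.ne'
    calc C3 * η ^ n * Sp ≤ C3 * (c1 / (4 * (C3 * Sp + 1))) * Sp := by
          gcongr; exact h2.trans (min_le_right _ _)
      _ = (C3 * Sp / (C3 * Sp + 1)) * (c1 / 4) := by field_simp
      _ ≤ 1 * (c1 / 4) := by
          gcongr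
          rw [div_le_one (by positivity)]; linarith
      _ = _ := one_mul _
  obtain ⟨N, hN⟩ := exists_nat_ge (max 1 (C3 * Kg ^ n * Sp * 4 / c1))
  have hN1 : (1:ℝ) ≤ N := (le_max_left _ _).trans hN
  have hN2 : C3 * Kg ^ n * Sp ≤ N * c1 / 4 := by
    have := (le_max_right _ _).trans hN
    rw [div_le_iff₀ hc10] at this
    linarith
  set q := min 1 (η / Kg) with hq
  have hq0 : 0 < q := by positivity
  have hq1 : q ≤ 1 := min_le_left _ _
  have hqK : q * Kg ≤ η := by
    rw [← le_div_iff₀ hKg0]; exact min_le_right _ _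
  set σ := min 1 c0 with hσ
  have hσ0 : 0 < σ := by positivity
  have hσ1 : σ ≤ 1 := min_le_left _ _
  have hσ2 : σ ^ 2 ≤ c0 := (pow_le_of_le_one hσ0.le hσ1 two_ne_zero).trans (min_le_right _ _)
  set σN := σ * q ^ N with hσN
  have hσN0 : 0 < σN := by positivity
  have hσN1 : σN ≤ 1 := mul_le_one₀ hσ1 (by positivity) (pow_le_one₀ hq0.le hq1)
  set Λ := D / σN ^ 2 + 1 with hΛ
  have hΛ0 : 0 < Λ := by positivity
  set θ := min (σN / 4) (K / Λ) with hθ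
  have hθ0 : 0 < θ := by positivity
  have hθ1 : θ ≤ σN / 4 := min_le_left _ _
  have hθ2 : θ * Λ ≤ K := by rw [← le_div_iff₀ hΛ0]; exact min_le_right _ _
  set ε := c1 * σN ^ (n + 2) / (4 * (C3 * D ^ (n + 1))) with hε
  have hε0 : 0 < ε := by positivity
  refine ⟨ε, θ, m, hε0, hθ0, by linarith, hm0, by linarith, ?_⟩
  intro y r a s v hSS z ρ t0 T hρ hzb hat htT0 hTθ hTs hvol x0 hx0
  obtain ⟨G, H, vt, Bs, hS⟩ := hSS
  by_contra hlt
  push Not at hlt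
  set tb := t0 - ρ ^ 2 with htb
  have hρ2 : 0 < ρ ^ 2 := by positivity
  have htbT : tb < T := by linarith
  set L := Λ / (ρ ^ 2 * K) with hL
  have hL0 : 0 < L := by positivity
  have hKL : K * L = Λ / ρ ^ 2 := by rw [hL]; field_simp
  have hLT : L * (T - t0) ≤ 1 := by
    calc L * (T - t0) ≤ L * (θ * ρ ^ 2) := by gcongr; linarith
      _ = θ * Λ / K := by rw [hL]; field_simp
      _ ≤ 1 := by rw [div_le_one hK0]; exact hθ2
  set g : ℝ → ℝ := fun t => (t - T) / ρ ^ 2 - K * Real.exp (L * (t - t0)) with hg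
  set g' : ℝ → ℝ := fun t => 1 / ρ ^ 2 - K * (Real.exp (L * (t - t0)) * (L * 1)) with hg'
  have hgd : ∀ t, HasDerivAt g (g' t) t := fun t =>
    (((hasDerivAt_id t).sub_const T).div_const _).sub
      (((((hasDerivAt_id t).sub_const t0).const_mul L).exp).const_mul K)
  have hg'c : Continuous g' := by simp only [hg']; fun_prop
  have hg'1 : ∀ t, g' t ≤ 1 / ρ ^ 2 := by
    intro t
    have : 0 ≤ K * (Real.exp (L * (t - t0)) * (L * 1)) := by positivity
    simp only [hg']; linarith
  have hg'2 : ∀ t, t0 ≤ t → g' t ≤ - (D / (σN * ρ) ^ 2) := by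
    intro t ht
    have h1 : 1 ≤ Real.exp (L * (t - t0)) := Real.one_le_exp (mul_nonneg hL0.le (by linarith))
    have h2 : K * L * 1 ≤ K * L * Real.exp (L * (t - t0)) := by gcongr
    have h3 : Λ / ρ ^ 2 = D / (σN * ρ) ^ 2 + 1 / ρ ^ 2 := by rw [hΛ]; field_simp
    have h4 : K * (Real.exp (L * (t - t0)) * (L * 1)) = K * L * Real.exp (L * (t - t0)) := by ring
    simp only [hg']
    rw [h4]; rw [hKL, h3] at h2; rw [hKL, h3]; linarith
  have hg0 : ∀ t ∈ Icc tb T, g t ≤ 0 := by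
    intro t ht
    have h1 : (t - T) / ρ ^ 2 ≤ 0 := div_nonpos_of_nonpos_of_nonneg (by linarith [ht.2]) hρ2.le
    have : 0 ≤ K * Real.exp (L * (t - t0)) := by positivity
    simp only [hg]; linarith
  have hg1 : g tb ≤ -1 := by
    have h1 : (tb - T) / ρ ^ 2 ≤ -1 := by rw [div_le_iff₀ hρ2]; linarith
    have : 0 ≤ K * Real.exp (L * (tb - t0)) := by positivity
    simp only [hg]; linarith
  have hgT : - (3 * K) ≤ g T := by
    have h1 : Real.exp (L * (T - t0)) ≤ 3 :=
      (Real.exp_le_exp.2 hLT).trans (Real.exp_one_lt_d9.le.trans (by norm_num))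
    have : K * Real.exp (L * (T - t0)) ≤ K * 3 := by gcongr
    simp only [hg, sub_self, zero_div]; linarith
  set sj : ℕ → ℝ := fun j => σ * q ^ j * ρ with hsj
  have hsj0 : ∀ j, 0 < sj j := fun j => by positivity
  have hsjle : ∀ j, sj j ≤ σ * ρ := fun j => by
    calc σ * q ^ j * ρ ≤ σ * 1 * ρ := by gcongr; exact pow_le_one₀ hq0.le hq1
      _ = _ := by ring
  have hsjρ : ∀ j, sj j ≤ ρ := fun j => (hsjle j).trans (by nlinarith)
  have hsjge : ∀ j < N, σN * ρ ≤ sj j := fun j hj => by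
    simp only [hσN, hsj]
    have := pow_le_pow_of_le_one hq0.le hq1 hj.le
    gcongr σ * ?_ * ρ
  have hcen : ∀ j, ∃ c : En n, j < N → dist x0 c ≤ 3 / 4 * sj j ∧ dist c z ≤ ρ - sj j / 2 := by
    intro j
    by_cases hj : j < N
    · obtain ⟨c, h1, h2⟩ := exists_dist_le_le (x := x0) (z := z) (δ := 3 / 4 * sj j) (ε := ρ - sj j / 2)
        (by have := hsj0 j; positivity) (by have := hsjρ j; linarith) (by
          have := hsjge j hj
          have h3 : θ * ρ ≤ σN * ρ / 4 := by nlinarith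
          linarith)
      exact ⟨c, fun _ => ⟨h1, h2⟩⟩
    · exact ⟨z, fun h => absurd h hj⟩
  choose yj hyj using hcen
  set As : Set (En n × ℝ) := {X | v X < 1} ∩ ball z ρ ×ˢ Ioo tb t0 with hAsd
  have hAs : MeasurableSet As :=
    (isOpen_lt hS.reg.cv continuous_const).measurableSet.inter (measurableSet_ball.prod measurableSet_Ioo)
  set P1 := C3 * (D ^ (n + 1) / (σN * ρ) ^ (n + 2)) with hP1
  have hP10 : 0 ≤ P1 := by positivity
  have htr : ∀ j < N, ∀ x, ∀ A, Ell ν A → -(trA A (psiH α (sj j) (yj j) x)) ≤ (D - 1) / sj j ^ 2 := by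
    intro j hj x A hA
    have := psi_trA_lower ν α (sj j) hν hα (hsj0 j) (yj j) x A hA
    rw [hD, add_sub_cancel_right]
    rw [neg_div] at this
    linarith
  have hinv : ∀ j, 1 / ρ ^ 2 ≤ 1 / sj j ^ 2 := fun j => by
    have := hsj0 j; have := hsjρ j
    gcongr
  have key := sum_est ν S hν y r a s v G H vt Bs hS α hα g g' hg'c hgd tb T m hat hTs hm0 htbT hg0 hg1 N sj yj
    (fun j _ => hsj0 j) (by
      intro j hj
      refine (closedBall_subset_closedBall' ?_).trans hzb
      have h1 := (hyj j hj).2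
      have h2 := hsjρ j; have h3 := hsj0 j
      linarith) Kg η hη0.le (by linarith) hKg0 (by
      intro j k hjk hk
      calc σ * q ^ k * ρ * Kg ≤ σ * q ^ (j + 1) * ρ * Kg := by
            have := pow_le_pow_of_le_one hq0.le hq1 hjk
            gcongr σ * ?_ * ρ * Kg
        _ = (q * Kg) * (σ * q ^ j * ρ) := by ring
        _ ≤ η * (σ * q ^ j * ρ) := by gcongr) As hAs D P1 hD0.le hP10 (by
      intro j hj
      rw [hP1]
      have h0 := hsj0 j
      have h1 := hsjge j hj
      have : sj j ^ n * (D / sj j ^ 2) ^ (n + 1) = D ^ (n + 1) / sj j ^ (n + 2) := by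
        rw [div_pow, ← pow_mul]
        field_simp
        ring
      rw [this]
      gcongr) (by
      intro j hj x hx t ht hw hXA A hA
      have h1 := htr j hj x A hA
      have h2 := hg'1 t
      have h3 := hinv j
      have h4 : D / sj j ^ 2 = (D - 1) / sj j ^ 2 + 1 / sj j ^ 2 := by rw [← add_div]; ring
      linarith) (by
      intro j hj x hx t ht hw hXA A hA
      have h0 := hsj0 j
      rcases le_or_gt t0 t with htt | htt
      · have h1 := htr j hj x A hA
        have h2 := hg'2 t htt
        have h3 : (D - 1) / sj j ^ 2 ≤ D / (σN * ρ) ^ 2 := by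
          have := hsjge j hj
          gcongr
          linarith
        linarith
      · have hxn : ‖x - yj j‖ < sj j := by rwa [mem_ball, dist_eq_norm] at hx
        rcases le_or_gt (sj j / 2) ‖x - yj j‖ with hd | hd
        · have h1 := psi_trA_lower2 ν (sj j) hν h0 (yj j) x A hA hd hxn.le
          have h2 := hg'1 t
          have h3 : 1 / ρ ^ 2 ≤ c0 / sj j ^ 2 := by
            rw [div_le_div_iff₀ hρ2 (by positivity)]
            calc 1 * sj j ^ 2 ≤ (σ * ρ) ^ 2 := by
                  rw [one_mul]; gcongr; exact hsjle j
              _ = σ ^ 2 * ρ ^ 2 := by ring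
              _ ≤ _ := by gcongr
          linarith
        · exfalso
          refine hXA ⟨?_, ?_, ?_, ?_⟩
          · have h1 := psi_le_one α (sj j) hα h0 (yj j) x
            have h2 := hg0 t ⟨ht.1.le, ht.2.le⟩
            simp only [bw] at hw
            have hg1' : g tb ≤ -1 := hg1
            have h5 : g t < 0 := by
              have h1 : (t - T) / ρ ^ 2 ≤ 0 := div_nonpos_of_nonpos_of_nonneg (by linarith [ht.2]) hρ2.le
              have : 0 < K * Real.exp (L * (t - t0)) := by positivity
              simp only [hg]; linarith
            show v (x, t) < 1
            linarith
          · have h1 := (hyj j hj).2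
            rw [mem_ball]
            rw [← dist_eq_norm] at hd
            have := dist_triangle x (yj j) z
            show dist x z < ρ
            linarith
          · exact ht.1
          · exact htt) x0 (by
      intro j hj
      have h1 := (hyj j hj).1
      have h0 := hsj0 j
      rw [mem_closedBall]; linarith) (by
      intro j hj
      have h1 := (hyj j hj).1
      rw [dist_eq_norm] at h1
      have h2 := psi_ge α (sj j) hα (hsj0 j) (yj j) x0 h1
      simp only [bw]
      linarith)
  have hfin := key.trans (add_le_add (mul_le_mul_right hvol _) (mul_le_mul_right (ENNReal.ofReal_le_ofReal (le_max_left S 0)) _))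
  rw [← ENNReal.ofReal_mul (by positivity), ← ENNReal.ofReal_mul (by positivity),
    ← ENNReal.ofReal_add (by positivity) (by positivity), ENNReal.ofReal_le_ofReal_iff (by positivity)] at hfin
  have e1 : P1 * (ε * ρ ^ (n + 2)) = c1 / 4 := by
    rw [hP1, hε, mul_pow]; field_simp
  have e2 : (N:ℝ) * P1 * (ε * ρ ^ (n + 2)) = N * c1 / 4 := by
    rw [mul_assoc, e1]; ring
  have e3 : C3 * (N * η ^ n + Kg ^ n) * Sp ≤ N * (c1 / 4) + N * c1 / 4 := by
    calc C3 * (N * η ^ n + Kg ^ n) * Sp = N * (C3 * η ^ n * Sp) + C3 * Kg ^ n * Sp := by ring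
      _ ≤ _ := by gcongr
  have : 0 < N * c1 := by positivity
  rw [← hc1, ← hC3, ← hSp] at hfin
  linarith

/-- growth lemma (scaled) -/
def UML (n : ℕ) (ν S ε θ c : ℝ) : Prop :=
    ∀ (y : En n) (r a s : ℝ) (v : En n × ℝ → ℝ), SS ν S y r a s v →
    ∀ (lam : ℝ), 0 < lam → ∀ (z : En n) (ρ t0 T : ℝ), 0 < ρ → closedBall z (2 * ρ) ⊆ ball y r → a ≤ t0 - ρ ^ 2 → t0 ≤ T →
    T ≤ t0 + θ * ρ ^ 2 → T ≤ s →
    volume ({X | v X < lam} ∩ ball z ρ ×ˢ Ioo (t0 - ρ ^ 2) t0) ≤ ENNReal.ofReal (ε * ρ ^ (n + 2)) →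
    ∀ x0, dist x0 z ≤ (1 + θ) * ρ → c * lam ≤ v (x0, T)

lemma uml (n : ℕ) (hn : 0 < n) (ν S : ℝ) (hν : 1 ≤ ν) :
    ∃ ε θ c : ℝ, 0 < ε ∧ 0 < θ ∧ θ ≤ 1 ∧ 0 < c ∧ c ≤ 1 ∧ UML n ν S ε θ c := by
  obtain ⟨ε, θ, c, h1, h2, h3, h4, h5, h⟩ := uml_one n hn ν S hν
  refine ⟨ε, θ, c, h1, h2, h3, h4, h5, ?_⟩
  intro y r a s v hS lam hlam z ρ t0 T hρ hz ha ht hT hs hv x0 hx0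
  have := h y r a s _ (hS.scale lam⁻¹ (by positivity)) z ρ t0 T hρ hz ha ht hT hs (by
    refine le_trans (le_of_eq ?_) hv
    congr 2
    ext X
    simp only [mem_ofPred_eq]
    rw [inv_mul_lt_iff₀ hlam, mul_one]) x0 hx0
  rwa [le_inv_mul_iff₀ hlam, mul_comm] at this

/-- one step of propagation -/
lemma step_prop {ν S ε θ c : ℝ} (hθ : 0 < θ) (hU : UML n ν S ε θ c)
    {y : En n} {r a s : ℝ} {v : En n × ℝ → ℝ} (hS : SS ν S y r a s v) {lam : ℝ} (hlam : 0 < lam)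
    (x : En n) (ρ ρ' T δ : ℝ) (hρ' : 0 < ρ') (hρρ : ρ' ≤ ρ) (hδ0 : 0 ≤ δ) (hδ : δ ≤ θ * ρ' ^ 2)
    (hb : closedBall x (2 * ρ) ⊆ ball y r) (ha : a ≤ T - δ - ρ' ^ 2) (hTs : T ≤ s)
    (h : ∀ z ∈ closedBall x ρ, ∀ t ∈ Icc (T - δ - ρ' ^ 2) (T - δ), lam ≤ v (z, t))
    (x0 : En n) (hx0 : dist x0 x ≤ ρ + θ * ρ') : c * lam ≤ v (x0, T) := by
  obtain ⟨z, h1, h2⟩ := exists_dist_le_le (x := x0) (z := x) (δ := (1 + θ) * ρ') (ε := ρ - ρ')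
    (by positivity) (by linarith) (by linarith)
  refine hU y r a s v hS lam hlam z ρ' (T - δ) T hρ' ?_ ha (by linarith) (by linarith) hTs ?_ x0 h1
  · refine (closedBall_subset_closedBall' ?_).trans hb
    linarith
  · have : ({X | v X < lam} ∩ ball z ρ' ×ˢ Ioo (T - δ - ρ' ^ 2) (T - δ)) = ∅ := by
      ext ⟨x', t⟩
      simp only [mem_inter_iff, mem_ofPred_eq, mem_prod, mem_ball, mem_Ioo, mem_empty_iff_false, iff_false]
      rintro ⟨hlt, hx', ht1, ht2⟩
      have := h x' (by
        rw [mem_closedBall]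
        have := dist_triangle x' z x
        linarith) t ⟨ht1.le, ht2.le⟩
      linarith
    rw [this]; simp

/-- extension in time -/
lemma time_ext {ν S ε θ c : ℝ} (hθ : 0 < θ) (hθ1 : θ ≤ 1) (hc : 0 < c) (hc1 : c ≤ 1) (hU : UML n ν S ε θ c)
    {y : En n} {r a s : ℝ} {v : En n × ℝ → ℝ} (hS : SS ν S y r a s v) {lam : ℝ} (hlam : 0 < lam)
    (x : En n) (ρ t τ q : ℝ) (hρ : 0 < ρ) (hq0 : 0 < q) (hq1 : q ≤ 1) (hqτ : 2 * q ≤ τ)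
    (hb : closedBall x (2 * ρ) ⊆ ball y r) (ha : a ≤ t)
    (h : ∀ z ∈ closedBall x ρ, ∀ t' ∈ Icc t (t + τ * ρ ^ 2), t' ≤ s → lam ≤ v (z, t')) (k : ℕ) :
    ∀ z ∈ closedBall x ρ, ∀ t' ∈ Icc t (t + τ * ρ ^ 2 + k * (θ * (q * ρ) ^ 2)), t' ≤ s → c ^ k * lam ≤ v (z, t') := by
  induction k with
  | zero => simpa using h
  | succ k ih =>
    intro z hz t' ht' hts
    rcases le_or_gt t' (t + τ * ρ ^ 2 + k * (θ * (q * ρ) ^ 2)) with h1 | h1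
    · refine le_trans ?_ (ih z hz t' ⟨ht'.1, h1⟩ hts)
      rw [pow_succ]
      have : 0 < c ^ k * lam := by positivity
      nlinarith
    · have e1 : (q * ρ) ^ 2 ≤ τ / 2 * ρ ^ 2 := by
        rw [mul_pow]; gcongr; nlinarith
      have e2 : θ * (q * ρ) ^ 2 ≤ (q * ρ) ^ 2 := by
        have : 0 ≤ (q * ρ) ^ 2 := by positivity
        nlinarith
      have e3 : 0 ≤ (k:ℝ) * (θ * (q * ρ) ^ 2) := by positivity
      have hge : t ≤ t' - θ * (q * ρ) ^ 2 - (q * ρ) ^ 2 := by linarith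
      have := step_prop (lam := c ^ k * lam) hθ hU hS (by positivity) x ρ (q * ρ) t' (θ * (q * ρ) ^ 2) (by positivity)
        (by nlinarith) (by positivity) le_rfl hb (by linarith) hts (by
          intro z' hz' t'' ht''
          refine ih z' hz' t'' ⟨by linarith [ht''.1], ?_⟩ ?_
          · have := ht'.2
            push_cast at this
            linarith [ht''.2]
          · have : 0 ≤ θ * (q * ρ) ^ 2 := by positivity
            linarith [ht''.2]) z (by
          have : 0 ≤ θ * (q * ρ) := by positivity
          rw [mem_closedBall] at hz; linarith)
      rw [pow_succ]; linarith

/-- moving along a segment -/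
lemma move_seg {ν S ε θ c : ℝ} (hθ : 0 < θ) (hc : 0 < c) (hU : UML n ν S ε θ c)
    {y : En n} {r a s : ℝ} {v : En n × ℝ → ℝ} (hS : SS ν S y r a s v) {lam : ℝ} (hlam : 0 < lam)
    (x z : En n) (ρ t t2 q : ℝ) (N : ℕ) (hN : 0 < N) (hρ : 0 < ρ) (hq0 : 0 < q) (hq1 : q ≤ 1)
    (hxz : dist x z ≤ N * (θ * (q * ρ)))
    (hb : closedBall x (2 * ρ) ⊆ ball y r) (hb' : closedBall z (2 * ρ) ⊆ ball y r) (ha : a ≤ t)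
    (h : ∀ z ∈ closedBall x ρ, ∀ t' ∈ Icc t t2, t' ≤ s → lam ≤ v (z, t')) (i : ℕ) (hi : i ≤ N) :
    ∀ z' ∈ closedBall (x + ((i:ℝ) / N) • (z - x)) ρ, ∀ t' ∈ Icc (t + i * (q * ρ) ^ 2) t2, t' ≤ s → c ^ i * lam ≤ v (z', t') := by
  have hN' : (0:ℝ) < N := by exact_mod_cast hN
  induction i with
  | zero => simpa using h
  | succ i ih =>
    have ih := ih (by omega)
    intro z' hz' t' ht' hts
    have hi' : (i:ℝ) ≤ N := by exact_mod_cast (by omega : i ≤ N)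
    have hbi : closedBall (x + ((i:ℝ) / N) • (z - x)) (2 * ρ) ⊆ ball y r := by
      intro w hw
      set f : ℝ := (i:ℝ) / N
      have hf0 : 0 ≤ f := by positivity
      have hf1 : f ≤ 1 := (div_le_one hN').2 hi'
      set d := w - (x + f • (z - x)) with hd
      have hd' : ‖d‖ ≤ 2 * ρ := by rwa [mem_closedBall, dist_eq_norm] at hw
      have h1 : x + d ∈ ball y r := hb (by rw [mem_closedBall, dist_eq_norm]; simpa using hd')
      have h2 : z + d ∈ ball y r := hb' (by rw [mem_closedBall, dist_eq_norm]; simpa using hd')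
      have := (convex_ball y r) h1 h2 (sub_nonneg.2 hf1) hf0 (by ring)
      convert this using 1
      rw [hd]
      module
    have hge : t + i * (q * ρ) ^ 2 ≤ t' - 0 - (q * ρ) ^ 2 := by
      have := ht'.1; push_cast at this; linarith
    have := step_prop (lam := c ^ i * lam) hθ hU hS (by positivity) (x + ((i:ℝ) / N) • (z - x)) ρ (q * ρ) t' 0 (by positivity)
        (by nlinarith) le_rfl (by positivity) hbi (by
          have : 0 ≤ i * (q * ρ) ^ 2 := by positivity
          linarith) hts (by
          intro z'' hz'' t'' ht''
          have h0 : 0 ≤ (q * ρ) ^ 2 := by positivity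
          refine ih z'' hz'' t'' ⟨by linarith [ht''.1], by linarith [ht''.2, ht'.2]⟩ (by linarith [ht''.2])) z' (by
          rw [mem_closedBall] at hz'
          have h1 := dist_triangle z' (x + (((i + 1 : ℕ):ℝ) / N) • (z - x)) (x + ((i:ℝ) / N) • (z - x))
          have h2 : dist (x + (((i + 1 : ℕ):ℝ) / N) • (z - x)) (x + ((i:ℝ) / N) • (z - x)) = dist x z / N := by
            rw [dist_eq_norm, dist_comm x z, dist_eq_norm]
            have : x + (((i + 1 : ℕ):ℝ) / N) • (z - x) - (x + ((i:ℝ) / N) • (z - x)) = (1 / (N:ℝ)) • (z - x) := by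
              rw [add_sub_add_left_eq_sub, ← sub_smul]
              congr 1
              push_cast; ring
            rw [this, norm_smul, Real.norm_eq_abs, abs_of_pos (by positivity)]
            ring
          have h3 : dist x z / N ≤ θ * (q * ρ) := by rw [div_le_iff₀ hN']; linarith
          linarith)
    rw [pow_succ]; linarith

/-- propagated growth lemma -/
lemma growth {ν S ε θ c : ℝ} (hθ : 0 < θ) (hθ1 : θ ≤ 1) (hc : 0 < c) (hc1 : c ≤ 1) (hU : UML n ν S ε θ c)
    (Λ T1 T2 : ℝ) (hΛ : 0 < Λ) (hT1 : 0 < T1) (hT2 : 0 < T2) :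
    ∃ c' : ℝ, 0 < c' ∧ c' ≤ 1 ∧
    ∀ (y : En n) (r a s : ℝ) (v : En n × ℝ → ℝ), SS ν S y r a s v → ∀ lam : ℝ, 0 < lam →
    ∀ (x z : En n) (ρ t0 t' : ℝ), 0 < ρ → closedBall x (2 * ρ) ⊆ ball y r → closedBall z (2 * ρ) ⊆ ball y r →
    a ≤ t0 - ρ ^ 2 → 
    volume ({X | v X < lam} ∩ ball x ρ ×ˢ Ioo (t0 - ρ ^ 2) t0) ≤ ENNReal.ofReal (ε * ρ ^ (n + 2)) →
    dist x z ≤ Λ * ρ → t0 + T1 * ρ ^ 2 ≤ t' → t' ≤ t0 + T2 * ρ ^ 2 → t' ≤ s → c' * lam ≤ v (z, t') := by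
  set q1 := θ / 2 with hq1
  obtain ⟨k, hk⟩ := exists_nat_ge (T2 / (θ * q1 ^ 2))
  set q := min 1 (T1 / (Λ / θ + 1)) with hq
  have hq0 : 0 < q := by positivity
  have hqle : q ≤ 1 := min_le_left _ _
  obtain ⟨N, hN1, hN2⟩ : ∃ N : ℕ, Λ / (θ * q) ≤ N ∧ (N:ℝ) < Λ / (θ * q) + 1 :=
    ⟨⌈Λ / (θ * q)⌉₊, Nat.le_ceil _, Nat.ceil_lt_add_one (by positivity)⟩
  have hN0 : 0 < N := by
    have : (0:ℝ) < N := lt_of_lt_of_le (by positivity) hN1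
    exact_mod_cast this
  refine ⟨c ^ N * (c ^ k * c), by positivity, ?_, ?_⟩
  · have h1 : c ^ N ≤ 1 := pow_le_one₀ hc.le hc1
    have h2 : c ^ k ≤ 1 := pow_le_one₀ hc.le hc1
    exact mul_le_one₀ h1 (by positivity) (mul_le_one₀ h2 hc.le hc1)
  intro y r a s v hS lam hlam x z ρ t0 t' hρ hbx hbz ha hvol hxz ht1 ht2 hts
  have h0 : ∀ z ∈ closedBall x ρ, ∀ t' ∈ Icc t0 (t0 + θ * ρ ^ 2), t' ≤ s → c * lam ≤ v (z, t') := by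
    intro z hz t' ht' hts
    refine hU y r a s v hS lam hlam x ρ t0 t' hρ hbx ha ht'.1 ht'.2 hts hvol z ?_
    rw [mem_closedBall] at hz
    nlinarith
  have hat0 : a ≤ t0 := by have : 0 ≤ ρ ^ 2 := by positivity
                           linarith
  have h1 := time_ext hθ hθ1 hc hc1 hU hS (lam := c * lam) (by positivity) x ρ t0 θ q1 hρ (by positivity) (by linarith)
    (by linarith) hbx hat0 h0 k
  have hkk : T2 * ρ ^ 2 ≤ k * (θ * (q1 * ρ) ^ 2) := by
    rw [div_le_iff₀ (by positivity)] at hk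
    calc T2 * ρ ^ 2 ≤ (k * (θ * q1 ^ 2)) * ρ ^ 2 := by gcongr
      _ = _ := by ring
  have h2 := move_seg hθ hc hU hS (lam := c ^ k * (c * lam)) (by positivity) x z ρ t0 (t0 + T2 * ρ ^ 2) q N hN0 hρ hq0 hqle
    (by
      refine hxz.trans ?_
      rw [div_le_iff₀ (by positivity)] at hN1
      calc Λ * ρ ≤ (N * (θ * q)) * ρ := by gcongr
        _ = _ := by ring) hbx hbz hat0 (by
      intro z hz t' ht' hts
      refine h1 z hz t' ⟨ht'.1, ?_⟩ hts
      have : 0 ≤ θ * ρ ^ 2 := by positivity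
      linarith [ht'.2]) N le_rfl z (by
      have hN' : (N:ℝ) ≠ 0 := by exact_mod_cast hN0.ne'
      rw [div_self hN', one_smul, add_sub_cancel]
      exact mem_closedBall_self hρ.le) t' ⟨?_, ht2⟩ hts
  · linarith
  · refine le_trans ?_ ht1
    have : N * (q * ρ) ^ 2 ≤ T1 * ρ ^ 2 := by
      calc N * (q * ρ) ^ 2 = (N * q ^ 2) * ρ ^ 2 := by ring
        _ ≤ _ := by
          gcongr
          calc N * q ^ 2 ≤ (Λ / (θ * q) + 1) * q ^ 2 := by gcongr
            _ = Λ / θ * q + q * q := by field_simp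
            _ ≤ Λ / θ * q + q * 1 := by gcongr
            _ = q * (Λ / θ + 1) := by ring
            _ ≤ _ := by rw [← le_div_iff₀ (by positivity)]; exact min_le_right _ _
    linarith

lemma stack1 (k : ℝ) (hk : 0 ≤ k) (m : ℕ) : ∀ S : Finset (ℝ × ℝ), S.card ≤ m → (∀ p ∈ S, p.1 < p.2) →
    volume (⋃ p ∈ S, Ioo (p.1 - k * (p.2 - p.1)) p.2) ≤
      ENNReal.ofReal (1 + k) * volume (⋃ p ∈ S, Ioo p.1 p.2) := by
  induction m with
  | zero =>
    intro S hS _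
    have : S = ∅ := Finset.card_eq_zero.1 (by omega)
    subst this; simp
  | succ m ih =>
    intro S hS hp
    by_cases hd : (S : Set (ℝ × ℝ)).PairwiseDisjoint (fun p => Ioo p.1 p.2)
    · rw [measure_biUnion_finset hd (fun _ _ => measurableSet_Ioo), Finset.mul_sum]
      refine (measure_biUnion_finset_le _ _).trans (Finset.sum_le_sum fun p hpS => ?_)
      rw [Real.volume_Ioo, Real.volume_Ioo, ← ENNReal.ofReal_mul (by positivity)]
      refine ENNReal.ofReal_le_ofReal (le_of_eq (by ring))
    · simp only [Set.PairwiseDisjoint, Set.Pairwise] at hd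
      push Not at hd
      obtain ⟨p, hpS, q, hqS, hpq, hnd⟩ := hd
      rw [Function.onFun, Set.not_disjoint_iff] at hnd
      obtain ⟨t, ht1, ht2⟩ := hnd
      set p' : ℝ × ℝ := (min p.1 q.1, max p.2 q.2) with hp'
      set S' := insert p' ((S.erase p).erase q) with hS'
      have hqp : q ∈ S.erase p := Finset.mem_erase.2 ⟨hpq.symm, hqS⟩
      have hcard : S'.card ≤ m := by
        have h1 := Finset.card_insert_le p' ((S.erase p).erase q)
        have h2 := Finset.card_erase_of_mem hqp
        have h3 := Finset.card_erase_of_mem hpS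
        have h4 : 0 < (S.erase p).card := Finset.card_pos.2 ⟨q, hqp⟩
        rw [← hS'] at h1
        omega
      have hSS : S = insert p (insert q ((S.erase p).erase q)) := by
        rw [Finset.insert_erase hqp, Finset.insert_erase hpS]
      have hp1 := hp p hpS
      have hq1 := hp q hqS
      have h := ih S' hcard (by
        intro p0 hp0
        rcases Finset.mem_insert.1 hp0 with rfl | h0
        · simp only [hp']
          exact lt_of_le_of_lt (min_le_left _ _) (lt_of_lt_of_le hp1 (le_max_left _ _))
        · exact hp p0 (Finset.mem_of_mem_erase (Finset.mem_of_mem_erase h0)))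
      have hU : Ioo p'.1 p'.2 = Ioo p.1 p.2 ∪ Ioo q.1 q.2 :=
        (Ioo_union_Ioo' (ht2.1.trans ht1.2) (ht1.1.trans ht2.2) |>.symm)
      have e1 : (⋃ p ∈ S', Ioo p.1 p.2) = ⋃ p ∈ S, Ioo p.1 p.2 := by
        conv_rhs => rw [hSS]
        rw [hS', Finset.set_biUnion_insert, Finset.set_biUnion_insert, Finset.set_biUnion_insert, hU, union_assoc]
      rw [e1] at h
      refine le_trans (measure_mono ?_) h
      conv_lhs => rw [hSS]
      rw [hS', Finset.set_biUnion_insert, Finset.set_biUnion_insert, Finset.set_biUnion_insert, ← union_assoc]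
      refine union_subset_union (union_subset ?_ ?_) subset_rfl
      · refine Ioo_subset_Ioo ?_ (le_max_left _ _)
        have h1 : p'.1 ≤ p.1 := min_le_left _ _
        have h2 : p.2 ≤ p'.2 := le_max_left _ _
        nlinarith
      · refine Ioo_subset_Ioo ?_ (le_max_right _ _)
        have h1 : p'.1 ≤ q.1 := min_le_right _ _
        have h2 : q.2 ≤ p'.2 := le_max_right _ _
        nlinarith

/-- two-sided parabolic ball -/
def PB (X : En n × ℝ) (R : ℝ) : Set (En n × ℝ) := ball X.1 R ×ˢ Ioo (X.2 - R ^ 2) (X.2 + R ^ 2)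

/-- upper stack -/
def Stk (h : ℝ) (X : En n × ℝ) (R : ℝ) : Set (En n × ℝ) := ball X.1 R ×ˢ Ioo (X.2 + R ^ 2) (X.2 + (1 + h) * R ^ 2)

lemma stack_meas (h : ℝ) (hh : 0 < h) (F : Finset ((En n × ℝ) × ℝ)) (hF : ∀ p ∈ F, 0 < p.2) :
    volume (⋃ p ∈ F, PB p.1 p.2) ≤ ENNReal.ofReal (1 + 2 / h) * volume (⋃ p ∈ F, Stk h p.1 p.2) := by
  classical
  have m1 : MeasurableSet (⋃ p ∈ F, PB p.1 p.2) :=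
    Finset.measurableSet_biUnion _ fun p _ => measurableSet_ball.prod measurableSet_Ioo
  have m2 : MeasurableSet (⋃ p ∈ F, Stk h p.1 p.2) :=
    Finset.measurableSet_biUnion _ fun p _ => measurableSet_ball.prod measurableSet_Ioo
  rw [Measure.volume_eq_prod, Measure.prod_apply m1, Measure.prod_apply m2, ← lintegral_const_mul' _ _ ENNReal.ofReal_ne_top]
  refine lintegral_mono fun x => ?_
  set S : Finset (ℝ × ℝ) := (F.filter (fun p => x ∈ ball p.1.1 p.2)).image
    (fun p => (p.1.2 + p.2 ^ 2, p.1.2 + (1 + h) * p.2 ^ 2)) with hS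
  have key := stack1 (2 / h) (by positivity) S.card S le_rfl (by
    intro p hp
    obtain ⟨p0, hp0, rfl⟩ := Finset.mem_image.1 hp
    have := hF p0 (Finset.mem_filter.1 hp0).1
    have : 0 < h * p0.2 ^ 2 := by positivity
    simp only
    linarith)
  have e2 : (⋃ p ∈ S, Ioo p.1 p.2) = Prod.mk x ⁻¹' (⋃ p ∈ F, Stk h p.1 p.2) := by
    ext t
    simp only [hS, Finset.mem_image, Finset.mem_filter, mem_iUnion, exists_prop, mem_preimage, Stk, mem_prod]
    constructor
    · rintro ⟨_, ⟨p, ⟨hp, hx⟩, rfl⟩, ht⟩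
      exact ⟨p, hp, hx, ht⟩
    · rintro ⟨p, hp, hx, ht⟩
      exact ⟨_, ⟨p, ⟨hp, hx⟩, rfl⟩, ht⟩
  rw [e2] at key
  refine le_trans (measure_mono ?_) key
  intro t ht
  simp only [mem_preimage, mem_iUnion, exists_prop] at ht
  obtain ⟨p, hp, hx, ht1, ht2⟩ := ht
  simp only [mem_iUnion, exists_prop]
  refine ⟨_, Finset.mem_image.2 ⟨p, Finset.mem_filter.2 ⟨hp, hx⟩, rfl⟩, ?_, ?_⟩
  · have : p.1.2 + p.2 ^ 2 - 2 / h * (p.1.2 + (1 + h) * p.2 ^ 2 - (p.1.2 + p.2 ^ 2)) = p.1.2 - p.2 ^ 2 := by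
      field_simp; ring
    simp only [this]
    exact ht1
  · have : 0 ≤ h * p.2 ^ 2 := by positivity
    simp only at ht2 ⊢
    linarith

lemma vol_PB (X : En n × ℝ) (R : ℝ) (hR : 0 < R) : volume (PB X R) = ENNReal.ofReal (2 * omg n * R ^ (n + 2)) := by
  have := omg_pos (n := n)
  rw [PB, Measure.volume_eq_prod, Measure.prod_prod, vol_ball _ _ hR, Real.volume_Ioo, ← ENNReal.ofReal_mul (by positivity)]
  congr 1; ring

/-- Vitali covering for finite families of parabolic balls -/
lemma vitali_PB (F : Finset ((En n × ℝ) × ℝ)) (hF : ∀ p ∈ F, 0 < p.2) :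
    ∃ F' ⊆ F, (F' : Set ((En n × ℝ) × ℝ)).PairwiseDisjoint (fun p => PB p.1 p.2) ∧
      (⋃ p ∈ F, PB p.1 p.2) ⊆ ⋃ p ∈ F', PB p.1 (5 * p.2) := by
  classical
  obtain ⟨M, hM⟩ : ∃ M : ℝ, ∀ p ∈ F, p.2 ≤ M := by
    refine ⟨∑ p ∈ F, p.2, fun p hp => ?_⟩
    exact Finset.single_le_sum (f := fun p : (En n × ℝ) × ℝ => p.2) (fun p hp => (hF p hp).le) hp
  obtain ⟨u, hu, hd, hc⟩ := Vitali.exists_disjoint_subfamily_covering_enlargement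
    (fun p : (En n × ℝ) × ℝ => PB p.1 p.2) (F : Set _) (fun p => p.2) 2 one_lt_two (fun p hp => (hF p hp).le) M hM
    (fun p hp => ⟨p.1, by
      have := hF p hp
      refine ⟨mem_ball_self this, ?_, ?_⟩
      · have : 0 < p.2 ^ 2 := by positivity
        linarith
      · have : 0 < p.2 ^ 2 := by positivity
        linarith⟩)
  have hfin : u.Finite := F.finite_toSet.subset hu
  refine ⟨hfin.toFinset, by
    intro p hp
    exact hu (hfin.mem_toFinset.1 hp), by simpa using hd, ?_⟩
  intro X hX
  simp only [mem_iUnion, exists_prop] at hX ⊢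
  obtain ⟨p, hp, hX⟩ := hX
  obtain ⟨b, hb, ⟨Z, hZ1, hZ2⟩, hle⟩ := hc p hp
  refine ⟨b, hfin.mem_toFinset.2 hb, ?_⟩
  have hp0 := hF p hp
  have hb0 := hF b (hu hb)
  have hsq : p.2 ^ 2 ≤ 4 * b.2 ^ 2 := by nlinarith
  obtain ⟨hX1, hX2, hX3⟩ := hX
  obtain ⟨hZ11, hZ12, hZ13⟩ := hZ1
  obtain ⟨hZ21, hZ22, hZ23⟩ := hZ2
  refine ⟨?_, ?_, ?_⟩
  · rw [mem_ball] at *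
    have h1 := dist_triangle X.1 p.1.1 b.1.1
    have h2 := dist_triangle p.1.1 Z.1 b.1.1
    rw [dist_comm p.1.1 Z.1] at h2
    linarith
  · nlinarith
  · nlinarith

/-- superlevel set in a cylinder -/
def Lev (v : En n × ℝ → ℝ) (lam : ℝ) (y : En n) (R a b : ℝ) : Set (En n × ℝ) :=
  {X | lam < v X} ∩ ball y R ×ˢ Ioo a b

lemma Lev_open (v : En n × ℝ → ℝ) (hv : Continuous v) (lam : ℝ) (y : En n) (R a b : ℝ) : IsOpen (Lev v lam y R a b) :=
  (isOpen_lt continuous_const hv).inter (isOpen_ball.prod isOpen_Ioo)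

lemma Lev_fin (v : En n × ℝ → ℝ) (lam : ℝ) (y : En n) (R a b : ℝ) : volume (Lev v lam y R a b) < ⊤ := by
  refine lt_of_le_of_lt (measure_mono inter_subset_right) ?_
  rw [Measure.volume_eq_prod, Measure.prod_prod]
  exact ENNReal.mul_lt_top measure_ball_lt_top (by simp)

lemma radius_choice (ε : ℝ) (Γ : Set (En n × ℝ)) (hΓ : IsOpen Γ) (ρs : ℝ) (hρ : 0 < ρs) (hε : 0 ≤ ε) (X : En n × ℝ) (hX : X ∈ Γ)
    (hbad : ENNReal.ofReal (ε * ρs ^ (n + 2)) < volume (PB X ρs \ Γ)) :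
    ∃ R, 0 < R ∧ R ≤ ρs ∧ ENNReal.ofReal (ε * R ^ (n + 2)) < volume (PB X R \ Γ) ∧
      volume (PB X (R / 2) \ Γ) ≤ ENNReal.ofReal (ε * (R / 2) ^ (n + 2)) := by
  classical
  have hex : ∃ i : ℕ, volume (PB X (ρs * (1 / 2) ^ i) \ Γ) ≤ ENNReal.ofReal (ε * (ρs * (1 / 2) ^ i) ^ (n + 2)) := by
    obtain ⟨δ, hδ, hb⟩ := Metric.isOpen_iff.1 hΓ X hX
    obtain ⟨i, hi⟩ := exists_pow_lt_of_lt_one (by positivity : 0 < min δ 1 / ρs) (by norm_num : (1 / 2 : ℝ) < 1)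
    refine ⟨i, ?_⟩
    rw [lt_div_iff₀ hρ, mul_comm] at hi
    set R := ρs * (1 / 2) ^ i
    have hR0 : 0 < R := by positivity
    have hR1 : R < δ := hi.trans_le (min_le_left _ _)
    have hR2 : R < 1 := hi.trans_le (min_le_right _ _)
    have : PB X R \ Γ = ∅ := by
      rw [sdiff_eq_empty]
      refine subset_trans ?_ hb
      rintro ⟨x, t⟩ ⟨h1, h2, h3⟩
      rw [mem_ball, Prod.dist_eq, max_lt_iff]
      have hRR : R ^ 2 < R := by nlinarith
      refine ⟨(mem_ball.1 h1).trans hR1, ?_⟩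
      rw [Real.dist_eq, abs_lt]
      simp only at h2 h3
      constructor <;> simp only <;> linarith
    rw [this]; simp
  set i := Nat.find hex with hi
  have hspec := Nat.find_spec hex
  have hi0 : i ≠ 0 := by
    intro h0
    rw [← hi, h0] at hspec
    simp only [pow_zero, mul_one] at hspec
    exact absurd hbad (not_lt.2 hspec)
  obtain ⟨j, hj⟩ := Nat.exists_eq_succ_of_ne_zero hi0
  have hmin := Nat.find_min hex (m := j) (by omega)
  rw [not_le] at hmin
  refine ⟨ρs * (1 / 2) ^ j, by positivity, ?_, hmin, ?_⟩
  · calc ρs * (1 / 2) ^ j ≤ ρs * 1 := by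
          gcongr; exact pow_le_one₀ (by norm_num) (by norm_num)
      _ = _ := mul_one _
  · have : ρs * (1 / 2) ^ j / 2 = ρs * (1 / 2) ^ i := by rw [hj, Nat.succ_eq_add_one, pow_succ]; ring
    rw [this]; exact hspec

lemma crawl_step {ν S ε θ c : ℝ} (hε : 0 < ε) (hθ : 0 < θ) (hθ1 : θ ≤ 1) (hc : 0 < c) (hc1 : c ≤ 1) (hU : UML n ν S ε θ c) :
    ∃ η h c' : ℝ, 0 < η ∧ 0 < h ∧ 0 < c' ∧ c' ≤ 1 ∧
    ∀ (y : En n) (r a s : ℝ) (v : En n × ℝ → ℝ), SS ν S y r a s v → ∀ lam : ℝ, 0 < lam →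
    ∀ R b ρs : ℝ, 0 < ρs → R + 4 * ρs ≤ r → b + (1 + h) * ρs ^ 2 ≤ s →
    (∀ X ∈ Lev v lam y R a b, ENNReal.ofReal (ε * ρs ^ (n + 2)) < volume (PB X ρs \ Lev v lam y R a b)) →
    ENNReal.ofReal (1 + η) * volume (Lev v lam y R a b) ≤
      volume (Lev v (c' * lam) y (R + ρs) a (b + (1 + h) * ρs ^ 2)) := by
  classical
  have hom := omg_pos (n := n)
  set e := min 1 (ε / (2 * omg n * 5 ^ (n + 2))) with he
  have he0 : 0 < e := by positivity
  have he1 : e ≤ 1 := min_le_left _ _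
  have hee : e * (2 * omg n * 5 ^ (n + 2)) ≤ ε := by rw [← le_div_iff₀ (by positivity)]; exact min_le_right _ _
  set h := 8 / e with hh
  have hh0 : 0 < h := by positivity
  have hk : 2 / h = e / 4 := by rw [hh]; field_simp; norm_num
  obtain ⟨c', hc'0, hc'1, hgr⟩ := growth hθ hθ1 hc hc1 hU 2 3 (3 + 4 * h) two_pos (by norm_num) (by positivity)
  refine ⟨e / 8, h, c' / 2, by positivity, hh0, by positivity, by linarith, ?_⟩
  intro y r a s v hS lam hlam R b ρs hρs hRr hbs hbad
  set Γ := Lev v lam y R a b with hΓ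
  have hΓo : IsOpen Γ := Lev_open v hS.cont lam y R a b
  have hΓf : volume Γ < ⊤ := Lev_fin v lam y R a b
  rcases eq_or_ne (volume Γ) 0 with hz | hz
  · rw [hz, mul_zero]; exact zero_le
  -- compact subset
  have hlt : ENNReal.ofReal (1 / (1 + e / 4)) * volume Γ < volume Γ := by
    conv_rhs => rw [← one_mul (volume Γ)]
    rw [ENNReal.mul_lt_mul_iff_left hz hΓf.ne, ENNReal.ofReal_lt_one]
    rw [div_lt_one (by positivity)]; linarith
  obtain ⟨K, hKΓ, hKc, hKv⟩ := hΓo.exists_lt_isCompact hlt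
  have hch : ∀ X, ∃ Q : ℝ, X ∈ Γ → 0 < Q ∧ Q ≤ ρs ∧ ENNReal.ofReal (ε * Q ^ (n + 2)) < volume (PB X Q \ Γ) ∧
      volume (PB X (Q / 2) \ Γ) ≤ ENNReal.ofReal (ε * (Q / 2) ^ (n + 2)) := by
    intro X
    by_cases hX : X ∈ Γ
    · obtain ⟨Q, hQ⟩ := radius_choice ε Γ hΓo ρs hρs hε.le X hX (hbad X hX)
      exact ⟨Q, fun _ => hQ⟩
    · exact ⟨0, fun h => absurd h hX⟩
  choose rad hrad using hch
  obtain ⟨tt, htK, hcov⟩ := hKc.elim_nhds_subcover (fun X => PB X (rad X)) (by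
    intro X hX
    have h0 := (hrad X (hKΓ hX)).1
    refine (isOpen_ball.prod isOpen_Ioo).mem_nhds ⟨mem_ball_self h0, ?_, ?_⟩
    · have : 0 < rad X ^ 2 := by positivity
      linarith
    · have : 0 < rad X ^ 2 := by positivity
      linarith)
  set F : Finset ((En n × ℝ) × ℝ) := tt.image (fun X => (X, rad X)) with hF
  have hFm : ∀ p ∈ F, p.1 ∈ Γ ∧ p.2 = rad p.1 := by
    intro p hp
    obtain ⟨X, hX, rfl⟩ := Finset.mem_image.1 hp
    exact ⟨hKΓ (htK X hX), rfl⟩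
  have hFpos : ∀ p ∈ F, 0 < p.2 := fun p hp => by
    rw [(hFm p hp).2]; exact (hrad _ (hFm p hp).1).1
  set O := ⋃ p ∈ F, PB p.1 p.2 with hO
  have hKO : K ⊆ O := by
    intro X hX
    have := hcov hX
    simp only [mem_iUnion, exists_prop] at this
    obtain ⟨Z, hZ, hXZ⟩ := this
    simp only [hO, mem_iUnion, exists_prop]
    exact ⟨(Z, rad Z), Finset.mem_image_of_mem _ hZ, hXZ⟩
  have hOm : MeasurableSet O := Finset.measurableSet_biUnion _ fun p _ => measurableSet_ball.prod measurableSet_Ioo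
  -- gain
  obtain ⟨F', hF'F, hdisj, hF'cov⟩ := vitali_PB F hFpos
  have hgain : ENNReal.ofReal e * volume K ≤ volume (O \ Γ) := by
    calc ENNReal.ofReal e * volume K ≤ ENNReal.ofReal e * ∑ p ∈ F', volume (PB p.1 (5 * p.2)) := by
          gcongr
          exact (measure_mono (hKO.trans hF'cov)).trans (measure_biUnion_finset_le _ _)
      _ = ∑ p ∈ F', ENNReal.ofReal e * volume (PB p.1 (5 * p.2)) := Finset.mul_sum _ _ _
      _ ≤ ∑ p ∈ F', volume (PB p.1 p.2 \ Γ) := by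
          refine Finset.sum_le_sum fun p hp => ?_
          have hpF := hF'F hp
          have hp0 := hFpos p hpF
          have hb := (hrad _ (hFm p hpF).1).2.2.1
          rw [← (hFm p hpF).2] at hb
          refine le_trans ?_ hb.le
          rw [vol_PB _ _ (by positivity), ← ENNReal.ofReal_mul he0.le]
          refine ENNReal.ofReal_le_ofReal ?_
          calc e * (2 * omg n * (5 * p.2) ^ (n + 2)) = e * (2 * omg n * 5 ^ (n + 2)) * p.2 ^ (n + 2) := by
                rw [mul_pow]; ring
            _ ≤ _ := by gcongr
      _ = volume (⋃ p ∈ F', PB p.1 p.2 \ Γ) := by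
          rw [measure_biUnion_finset]
          · intro p hp q hq hpq
            exact (hdisj hp hq hpq).mono sdiff_subset sdiff_subset
          · intro p _
            exact (measurableSet_ball.prod measurableSet_Ioo).diff hΓo.measurableSet
      _ ≤ _ := by
          refine measure_mono ?_
          intro X hX
          simp only [mem_iUnion, exists_prop] at hX
          obtain ⟨p, hp, hX1, hX2⟩ := hX
          refine ⟨?_, hX2⟩
          simp only [hO, mem_iUnion, exists_prop]
          exact ⟨p, hF'F hp, hX1⟩
  have hOge : volume K + ENNReal.ofReal e * volume K ≤ volume O := by
    rw [← measure_inter_add_sdiff O hΓo.measurableSet]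
    exact add_le_add (measure_mono (subset_inter hKO hKΓ)) hgain
  have hst := stack_meas h hh0 F hFpos
  set E := ⋃ p ∈ F, Stk h p.1 p.2 with hE
  have hEsub : E ⊆ Lev v (c' / 2 * lam) y (R + ρs) a (b + (1 + h) * ρs ^ 2) := by
    intro X hX
    simp only [hE, mem_iUnion, exists_prop] at hX
    obtain ⟨p, hp, hX1, hX2, hX3⟩ := hX
    obtain ⟨hp1, hp2⟩ := hFm p hp
    obtain ⟨hr0, hr1, -, hr3⟩ := hrad _ hp1
    rw [← hp2] at hr0 hr1 hr3
    obtain ⟨hpv, hpb, hpa, hpb'⟩ := hp1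
    rw [mem_ball] at hpb hX1
    have hsq : p.2 ^ 2 ≤ ρs ^ 2 := by gcongr
    have hsq0 : 0 < p.2 ^ 2 := by positivity
    have hhsq : h * p.2 ^ 2 ≤ h * ρs ^ 2 := by gcongr
    have hXb : X.2 < b + (1 + h) * ρs ^ 2 := by linarith
    have hXp : dist X.1 y < R + ρs := by
      have := dist_triangle X.1 p.1.1 y
      linarith
    refine ⟨?_, hXp, by linarith, hXb⟩
    have := hgr y r a s v hS lam hlam p.1.1 X.1 (p.2 / 2) (p.1.2 + (p.2 / 2) ^ 2) X.2 (by positivity)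
      (by
        refine closedBall_subset_ball' ?_
        linarith)
      (by
        refine closedBall_subset_ball' ?_
        linarith)
      (by linarith) (by
        refine le_trans (measure_mono ?_) hr3
        rintro ⟨x', t'⟩ ⟨h1, h2, h3, h4⟩
        simp only [mem_ofPred_eq] at h1 
        simp only at h2 h3 h4
        refine ⟨⟨h2, ?_, ?_⟩, ?_⟩
        · simp only; linarith [sq_nonneg (p.2 / 2)]
        · exact h4
        · rintro ⟨h5, -⟩
          simp only [mem_ofPred_eq] at h5
          linarith) (by
        rw [dist_comm]; linarith) (by linarith) (by linarith) (by linarith)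
    show c' / 2 * lam < v X
    have hcl : 0 < c' * lam := by positivity
    have : c' * lam ≤ v X := this
    linarith
  refine le_trans ?_ (measure_mono hEsub)
  -- arithmetic
  have hEf : volume E < ⊤ := lt_of_le_of_lt (measure_mono hEsub) (Lev_fin _ _ _ _ _ _)
  have hKf : volume K < ⊤ := hKc.measure_lt_top
  have hfin := hOge.trans hst
  rw [hk] at hfin
  obtain ⟨gK, hgK⟩ : ∃ gK, gK = (volume K).toReal := ⟨_, rfl⟩
  rw [← ENNReal.ofReal_toReal hKf.ne, ← ENNReal.ofReal_toReal hEf.ne, ← ENNReal.ofReal_mul he0.le,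
    ← ENNReal.ofReal_mul (by positivity), ← ENNReal.ofReal_add (by positivity) (by positivity),
    ENNReal.ofReal_le_ofReal_iff (by positivity)] at hfin
  rw [← ENNReal.ofReal_toReal hΓf.ne, ← ENNReal.ofReal_toReal hKf.ne, ← ENNReal.ofReal_mul (by positivity)] at hKv
  rw [← ENNReal.ofReal_toReal hΓf.ne, ← ENNReal.ofReal_toReal hEf.ne, ← ENNReal.ofReal_mul (by positivity)]
  refine ENNReal.ofReal_le_ofReal ?_
  have hKv' := (ENNReal.ofReal_le_ofReal_iff (by positivity)).1 hKv.le
  set gG := (volume Γ).toReal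
  set gE := (volume E).toReal
  set k := (volume K).toReal
  have hk0 : 0 ≤ k := by positivity
  have h1 : gG ≤ (1 + e / 4) * k := by
    rw [div_mul_eq_mul_div, one_mul, div_le_iff₀ (by positivity)] at hKv'
    linarith
  have h2 : (1 + e / 4) * ((1 + e / 8) * gG) ≤ (1 + e / 4) * gE := by
    calc (1 + e / 4) * ((1 + e / 8) * gG) ≤ (1 + e / 4) * ((1 + e / 8) * ((1 + e / 4) * k)) := by gcongr
      _ = ((1 + e / 4) * (1 + e / 8) * (1 + e / 4)) * k := by ring
      _ ≤ (1 + e) * k := by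
        gcongr
        nlinarith [mul_pos he0 he0, mul_nonneg (mul_pos he0 he0).le (sub_nonneg.2 he1), mul_nonneg he0.le (sub_nonneg.2 he1)]
      _ ≤ _ := by linarith
  exact le_of_mul_le_mul_left h2 (by positivity)

lemma vol_cyl (y : En n) (R a b : ℝ) (hR : 0 < R) (hab : a ≤ b) :
    volume (ball y R ×ˢ Ioo a b : Set (En n × ℝ)) = ENNReal.ofReal (R ^ n * omg n * (b - a)) := by
  have hom := omg_pos (n := n)
  rw [Measure.volume_eq_prod, Measure.prod_prod, vol_ball _ _ hR, Real.volume_Ioo,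
    ← ENNReal.ofReal_mul (by positivity)]

lemma third_growth_core (n : ℕ) (hn : 0 < n) (ν S μ0 : ℝ) (hν : 1 ≤ ν) (hμ0 : 0 < μ0) :
    ∃ c : ℝ, 0 < c ∧ c ≤ 1 ∧ ∀ (y : En n) (r s : ℝ) (v : En n × ℝ → ℝ), 0 < r →
      SS ν S y r (s - r ^ 2) s v → ∀ lam : ℝ, 0 < lam →
      ENNReal.ofReal μ0 * volume (ball y (r / 2) ×ˢ Ioo (s - r ^ 2) (s - 3 / 4 * r ^ 2) : Set (En n × ℝ)) ≤
        volume (Lev v lam y (r / 2) (s - r ^ 2) (s - 3 / 4 * r ^ 2)) →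
      ∀ z ∈ closedBall y (r / 2), ∀ t' ∈ Icc (s - r ^ 2 / 4) s, c * lam ≤ v (z, t') := by
  obtain ⟨ε, θ, c0, hε, hθ, hθ1, hc0, hc01, hU⟩ := uml n hn ν S hν
  obtain ⟨η, h, c', hη, hh, hc', hc'1, hcr⟩ := crawl_step hε hθ hθ1 hc0 hc01 hU
  have hom := omg_pos (n := n)
  obtain ⟨k0, hk0⟩ : ∃ k0 : ℕ, 2 ^ (n + 2) / μ0 < (1 + η) ^ k0 :=
    pow_unbounded_of_one_lt _ (by linarith)
  obtain ⟨κ, hκ⟩ : ∃ κ : ℝ, κ = 1 / (16 * ((k0 : ℝ) + 1) * (1 + h)) := ⟨_, rfl⟩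
  have hκ0 : 0 < κ := by rw [hκ]; positivity
  have hκm : κ * (((k0 : ℝ) + 1) * (1 + h)) = 1 / 16 := by
    rw [hκ]; field_simp
  have hκk : ∀ k : ℕ, k ≤ k0 → ((k : ℝ) + 1) * (1 + h) * κ ≤ 1 / 16 := by
    intro k hk
    have hk' : (k : ℝ) ≤ k0 := by exact_mod_cast hk
    calc ((k : ℝ) + 1) * (1 + h) * κ ≤ ((k0 : ℝ) + 1) * (1 + h) * κ := by gcongr
      _ = 1 / 16 := by rw [← hκm]; ring
  have hκ16 : κ ≤ 1 / 16 := by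
    have := hκk 0 (Nat.zero_le _)
    push_cast at this
    nlinarith [mul_pos hh hκ0]
  have hκk1 : ∀ k : ℕ, k ≤ k0 → ((k : ℝ) + 1) * κ ≤ 1 / 16 := by
    intro k hk
    refine le_trans ?_ (hκk k hk)
    have : 0 ≤ ((k : ℝ) + 1) * κ * h := by positivity
    nlinarith
  obtain ⟨cT, hcT, hcT1, hgr⟩ := growth hθ hθ1 hc0 hc01 hU (2 / κ) 1 (1 / κ ^ 2) (by positivity) one_pos (by positivity)
  refine ⟨cT * c' ^ k0, by positivity, mul_le_one₀ hcT1 (by positivity) (pow_le_one₀ hc'.le hc'1), ?_⟩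
  intro y r s v hr hS lam hlam hvol z hz t' ht'
  by_contra hcon
  push Not at hcon
  have hr2 : 0 < r ^ 2 := by positivity
  obtain ⟨ρ, hρ⟩ : ∃ ρ, ρ = κ * r := ⟨_, rfl⟩
  have hρ0 : 0 < ρ := by rw [hρ]; positivity
  have hρr : ρ ≤ r / 16 := by rw [hρ]; nlinarith
  have hρk : ∀ k : ℕ, k ≤ k0 → ((k : ℝ) + 1) * ρ ≤ r / 16 := by
    intro k hk
    have := mul_le_mul_of_nonneg_right (hκk1 k hk) hr.le
    rw [hρ]; linarith
  have hρ2 : ∀ k : ℕ, k ≤ k0 → ((k : ℝ) + 1) * (1 + h) * ρ ^ 2 ≤ r ^ 2 / 16 := by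
    intro k hk
    have h1 := mul_le_mul_of_nonneg_right (hκk k hk) hr2.le
    have h2 : ((k : ℝ) + 1) * (1 + h) * ρ ^ 2 = ((k : ℝ) + 1) * (1 + h) * κ * r ^ 2 * κ := by rw [hρ]; ring
    have h3 : 0 ≤ ((k : ℝ) + 1) * (1 + h) * κ * r ^ 2 := by positivity
    rw [h2]
    nlinarith
  have hρs : ρ ^ 2 ≤ r ^ 2 / 256 := by nlinarith
  have hiter : ∀ k : ℕ, k ≤ k0 → ENNReal.ofReal ((1 + η) ^ k) * volume (Lev v lam y (r / 2) (s - r ^ 2) (s - 3 / 4 * r ^ 2)) ≤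
      volume (Lev v (c' ^ k * lam) y (r / 2 + k * ρ) (s - r ^ 2) (s - 3 / 4 * r ^ 2 + k * ((1 + h) * ρ ^ 2))) := by
    intro k
    induction k with
    | zero => intro _; simp
    | succ k ih =>
      intro hk
      have hk' : k ≤ k0 := by omega
      have hi := ih hk'
      have hR := hρk k hk'
      have hT := hρ2 k hk'
      have hstep := hcr y r (s - r ^ 2) s v hS (c' ^ k * lam) (by positivity) (r / 2 + k * ρ)
        (s - 3 / 4 * r ^ 2 + k * ((1 + h) * ρ ^ 2)) ρ hρ0 (by linarith) (by linarith) (by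
          intro X hX
          by_contra hle
          push Not at hle
          obtain ⟨hX1, hX2, hX3, hX4⟩ := hX
          rw [mem_ball] at hX2
          rw [mem_closedBall] at hz
          have hhρ : 0 ≤ h * ρ ^ 2 := by positivity
          have := hgr y r (s - r ^ 2) s v hS (c' ^ k * lam) (by positivity) X.1 z ρ (X.2 + ρ ^ 2) t' hρ0
            (closedBall_subset_ball' (by linarith)) (closedBall_subset_ball' (by linarith))
            (by linarith) (by
              refine le_trans (measure_mono ?_) hle
              rintro ⟨x', t1⟩ ⟨h1, h2, h3, h4⟩
              simp only [mem_ofPred_eq] at h1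
              simp only at h2 h3 h4
              refine ⟨⟨h2, ?_, ?_⟩, ?_⟩
              · simp only; linarith [sq_nonneg ρ]
              · exact h4
              · rintro ⟨h5, -⟩
                simp only [mem_ofPred_eq] at h5
                linarith)
            (by
              have e1 : 2 / κ * ρ = 2 * r := by rw [hρ]; field_simp
              have := dist_triangle_right X.1 z y
              rw [e1]; linarith)
            (by linarith [ht'.1])
            (by
              have e1 : 1 / κ ^ 2 * ρ ^ 2 = r ^ 2 := by rw [hρ]; field_simp
              rw [e1]; linarith [ht'.2, sq_nonneg ρ])
            ht'.2
          have hpw : c' ^ k0 ≤ c' ^ k := pow_le_pow_of_le_one hc'.le hc'1 hk'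
          have : cT * c' ^ k0 * lam ≤ cT * (c' ^ k * lam) := by
            rw [mul_assoc]; gcongr
          linarith)
      calc ENNReal.ofReal ((1 + η) ^ (k + 1)) * volume (Lev v lam y (r / 2) (s - r ^ 2) (s - 3 / 4 * r ^ 2))
          = ENNReal.ofReal (1 + η) * (ENNReal.ofReal ((1 + η) ^ k) * volume (Lev v lam y (r / 2) (s - r ^ 2) (s - 3 / 4 * r ^ 2))) := by
            rw [pow_succ, mul_comm ((1 + η) ^ k), ENNReal.ofReal_mul (by positivity), mul_assoc]
        _ ≤ _ := by gcongr
        _ ≤ _ := hstep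
        _ = _ := by
            congr 2
            · rw [pow_succ]; ring
            · push_cast; ring
            · push_cast; ring
  have hfin := hiter k0 le_rfl
  have hup : volume (Lev v (c' ^ k0 * lam) y (r / 2 + k0 * ρ) (s - r ^ 2) (s - 3 / 4 * r ^ 2 + k0 * ((1 + h) * ρ ^ 2))) ≤
      ENNReal.ofReal (r ^ n * omg n * r ^ 2) := by
    have e := vol_cyl y r (s - r ^ 2) s hr (by linarith)
    rw [show s - (s - r ^ 2) = r ^ 2 by ring] at e
    rw [← e]
    refine measure_mono ?_
    have h1 := hρk k0 le_rfl
    have h2 := hρ2 k0 le_rfl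
    have hhρ : 0 ≤ (1 + h) * ρ ^ 2 := by positivity
    rintro X ⟨-, hX2, hX3, hX4⟩
    exact ⟨ball_subset_ball (by linarith) hX2, hX3, by linarith⟩
  rw [vol_cyl y (r / 2) _ _ (by positivity) (by linarith), ← ENNReal.ofReal_mul hμ0.le] at hvol
  have hall : ENNReal.ofReal ((1 + η) ^ k0) * ENNReal.ofReal (μ0 * ((r / 2) ^ n * omg n * (s - 3 / 4 * r ^ 2 - (s - r ^ 2)))) ≤
      ENNReal.ofReal (r ^ n * omg n * r ^ 2) := le_trans (by gcongr) (hfin.trans hup)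
  rw [← ENNReal.ofReal_mul (by positivity), ENNReal.ofReal_le_ofReal_iff (by positivity)] at hall
  rw [div_lt_iff₀ hμ0] at hk0
  have e1 : (1 + η) ^ k0 * (μ0 * ((r / 2) ^ n * omg n * (s - 3 / 4 * r ^ 2 - (s - r ^ 2)))) =
      ((1 + η) ^ k0 * μ0) * (r ^ n * omg n * r ^ 2) / 2 ^ (n + 2) := by
    rw [div_pow, pow_add]; field_simp; ring
  rw [e1, div_le_iff₀ (by positivity), mul_comm (r ^ n * omg n * r ^ 2)] at hall
  have := le_of_mul_le_mul_right hall (by positivity)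
  linarith

lemma tietze_on (K : Set (En n × ℝ)) (hK : IsClosed K) (f : En n × ℝ → ℝ) (hf : ContinuousOn f K) :
    ∃ g : En n × ℝ → ℝ, Continuous g ∧ ∀ X ∈ K, g X = f X := by
  obtain ⟨g, hg⟩ := ContinuousMap.exists_restrict_eq hK ⟨K.domRestrict f, hf.domRestrict⟩
  refine ⟨g, g.continuous, fun X hX => ?_⟩
  have := congrArg (fun q => q ⟨X, hX⟩) hg
  exact this

lemma lin_expand (L : En n →L[ℝ] ℝ) : L = ∑ i, L (EuclideanSpace.single i 1) • innerSL ℝ (ev i : En n) := by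
  ext a
  have ha : a = ∑ i, a i • (EuclideanSpace.single i 1 : En n) := by
    ext j; simp [Finset.sum_apply, Pi.single_apply]
  conv_lhs => rw [ha]
  simp only [map_sum, map_smul, sum_apply, FunLike.coe_smul, Pi.smul_apply, innerSL_apply_apply, smul_eq_mul]
  refine Finset.sum_congr rfl fun i _ => ?_
  rw [real_inner_comm, inner_ev]; ring

/-- derivative of a combination of first derivatives -/
lemma grad_deriv {F : Type*} [NormedAddCommGroup F] [NormedSpace ℝ F] (w : Fin n → F) (u : En n × ℝ → ℝ)
    (X : En n × ℝ) (hd : ∀ j : Fin n, DifferentiableAt ℝ (fun x => Dx u j (x, X.2)) X.1) :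
    HasFDerivAt (fun x => ∑ j, Dx u j (x, X.2) • w j)
      (∑ j, (∑ i, Dxx u i j X • innerSL ℝ (ev i : En n)).smulRight (w j)) X.1 := by
  refine HasFDerivAt.fun_sum fun j _ => ?_
  have h1 := (hd j).hasFDerivAt
  rw [lin_expand (fderiv ℝ (fun x => Dx u j (x, X.2)) X.1)] at h1
  exact h1.smul_const (w j)

lemma dxx_symm (u : En n × ℝ → ℝ) (U : Set (En n × ℝ)) (hU : IsOpen U) 
    (h1 : ∀ X ∈ U, DifferentiableAt ℝ (fun x => u (x, X.2)) X.1)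
    (h2 : ∀ j : Fin n, ∀ X ∈ U, DifferentiableAt ℝ (fun x => Dx u j (x, X.2)) X.1)
    (X : En n × ℝ) (hX : X ∈ U) (i j : Fin n) : Dxx u i j X = Dxx u j i X := by
  have hd := grad_deriv (fun j => innerSL ℝ (ev j : En n)) u X (fun j => h2 j X hX)
  have hev : ∀ᶠ x in nhds X.1, HasFDerivAt (fun x => u (x, X.2)) (∑ j, Dx u j (x, X.2) • innerSL ℝ (ev j : En n)) x := by
    have hc : ContinuousAt (fun x : En n => (x, X.2)) X.1 := by fun_prop
    have : ∀ᶠ x in nhds X.1, (x, X.2) ∈ U := hc.preimage_mem_nhds (hU.mem_nhds hX)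
    filter_upwards [this] with x hx
    have := (h1 _ hx).hasFDerivAt
    rw [lin_expand (fderiv ℝ _ _)] at this
    exact this
  have := second_derivative_symmetric_of_eventually hev hd (ev i) (ev j)
  have e : ∀ i j : Fin n, ⟪(ev i : En n), ev j⟫ = if i = j then 1 else 0 := by
    intro i j; rw [inner_ev]; simp [ev, Pi.single_apply, eq_comm]
  simpa [sum_apply, innerSL_apply_apply, e] using this

lemma c21_reg (u : En n × ℝ → ℝ) (K U : Set (En n × ℝ)) (hK : IsClosed K) (hU : IsOpen U) (hUK : U ⊆ K)
    (hu : IsC21 u K) : ∃ v G H vt, Reg v G H vt U ∧ (∀ X ∈ K, v X = u X) ∧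
      (∀ X ∈ U, (∀ i, G X i = Dx u i X) ∧ (∀ i j, ⟪H X (ev i), ev j⟫ = Dxx u i j X) ∧ vt X = Dt u X) := by
  obtain ⟨v, hvc, hv⟩ := tietze_on K hK u hu.cont
  obtain ⟨vt, hvtc, hvt⟩ := tietze_on K hK _ hu.cont_t
  choose g hgc hg using fun i => tietze_on K hK _ (hu.cont_x i)
  choose hh hhc hhh using fun i j => tietze_on K hK _ (hu.cont_xx i j)
  have e : ∀ i j : Fin n, ⟪(ev i : En n), ev j⟫ = if i = j then 1 else 0 := by
    intro i j; rw [inner_ev]; simp [ev, Pi.single_apply, eq_comm]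
  have hnx : ∀ X ∈ U, ∀ᶠ x in nhds X.1, (x, X.2) ∈ U := by
    intro X hX
    have hc : ContinuousAt (fun x : En n => (x, X.2)) X.1 := by fun_prop
    exact hc.preimage_mem_nhds (hU.mem_nhds hX)
  have hnt : ∀ X ∈ U, ∀ᶠ t in nhds X.2, (X.1, t) ∈ U := by
    intro X hX
    have hc : ContinuousAt (fun t : ℝ => (X.1, t)) X.2 := by fun_prop
    exact hc.preimage_mem_nhds (hU.mem_nhds hX)
  refine ⟨v, fun X => ∑ j, g j X • ev j, fun X => ∑ j, (∑ i, hh i j X • innerSL ℝ (ev i : En n)).smulRight (ev j), vt,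
    ⟨hvc, ?_, ?_, hvtc, ?_, ?_, ?_, ?_⟩, hv, ?_⟩
  · fun_prop
  · refine continuous_finsetSum _ fun j _ => ?_
    have : Continuous fun X => (∑ i, hh i j X • innerSL ℝ (ev i : En n)) := by fun_prop
    exact ((ContinuousLinearMap.smulRightL ℝ (En n) (En n)).flip (ev j)).continuous.comp this
  · intro X hX
    have h1 := (hu.diff_x X (hUK hX)).hasFDerivAt
    rw [lin_expand (fderiv ℝ _ _)] at h1
    have h2 : HasFDerivAt (fun x => v (x, X.2)) _ X.1 := h1.congr_of_eventuallyEq (by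
      filter_upwards [hnx X hX] with x hx using hv _ (hUK hx))
    refine h2.congr_fderiv ?_
    ext a
    simp only [sum_apply, FunLike.coe_smul, Pi.smul_apply, innerSL_apply_apply, sum_inner, real_inner_smul_left, smul_eq_mul]
    refine Finset.sum_congr rfl fun i _ => ?_
    rw [hg i X (hUK hX)]; rfl
  · intro X hX
    have h1 := grad_deriv (fun j => (ev j : En n)) u X (fun j => hu.diff_xx j X (hUK hX))
    have h2 : HasFDerivAt (fun x => ∑ j, g j (x, X.2) • (ev j : En n)) _ X.1 := h1.congr_of_eventuallyEq (by
      filter_upwards [hnx X hX] with x hx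
      exact Finset.sum_congr rfl fun j _ => by rw [hg j _ (hUK hx)])
    refine h2.congr_fderiv ?_
    refine Finset.sum_congr rfl fun j _ => ?_
    congr 1
    exact Finset.sum_congr rfl fun i _ => by rw [hhh i j X (hUK hX)]
  · intro X hX
    have h1 := (hu.diff_t X (hUK hX)).hasDerivAt
    rw [hvt X (hUK hX)]
    exact h1.congr_of_eventuallyEq (by
      filter_upwards [hnt X hX] with t ht using hv _ (hUK ht))
  · intro X hX a b
    have hs : ∀ i j, hh i j X = hh j i X := fun i j => by
      rw [hhh i j X (hUK hX), hhh j i X (hUK hX)]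
      exact dxx_symm u U hU (fun X hX => hu.diff_x X (hUK hX)) (fun j X hX => hu.diff_xx j X (hUK hX)) X hX i j
    simp only [sum_apply, ContinuousLinearMap.smulRight_apply, FunLike.coe_smul, Pi.smul_apply,
      innerSL_apply_apply, sum_inner, inner_sum, real_inner_smul_left, real_inner_smul_right, smul_eq_mul, Finset.sum_mul]
    rw [Finset.sum_comm]
    refine Finset.sum_congr rfl fun i _ => Finset.sum_congr rfl fun j _ => ?_
    rw [hs i j, real_inner_comm a (ev i)]; ring
  · intro X hX
    refine ⟨fun i => ?_, fun i j => ?_, hvt X (hUK hX)⟩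
    · rw [← hg i X (hUK hX)]
      rw [← inner_ev]
      simp [sum_inner, real_inner_smul_left, e]
    · rw [← hhh i j X (hUK hX)]
      simp [sum_apply, innerSL_apply_apply, sum_inner, real_inner_smul_left, e]

lemma Reg.const_sub {v : En n × ℝ → ℝ} {G H vt U} (h : Reg v G H vt U) (M : ℝ) :
    Reg (fun X => M - v X) (fun X => - G X) (fun X => - H X) (fun X => - vt X) U where
  cv := continuous_const.sub h.cv
  cG := h.cG.neg
  cH := h.cH.neg
  ct := h.ct.neg
  dx := fun X hX => by
    refine ((h.dx X hX).const_sub M).congr_fderiv ?_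
    ext a; simp
  dxx := fun X hX => (h.dxx X hX).neg
  dt := fun X hX => (h.dt X hX).const_sub M
  symm := fun X hX a b => by
    simp [h.symm X hX a b]

lemma closure_pcyl (Y : En n × ℝ) (r : ℝ) (hr : 0 < r) :
    closure (pcyl Y r) = closedBall Y.1 r ×ˢ Icc (Y.2 - r ^ 2) Y.2 := by
  have : 0 < r ^ 2 := by positivity
  rw [pcyl, box, closure_prod_eq, closure_ball _ hr.ne', closure_Ioo (by linarith)]

lemma toSS (ν S : ℝ) (Y : En n × ℝ) (r : ℝ) (u : En n × ℝ → ℝ)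
    (a : En n × ℝ → Matrix (Fin n) (Fin n) ℝ) (b : En n × ℝ → En n) (hr : 0 < r)
    (hu : IsC21 u (closure (pcyl Y r))) (ha : UnifParabolic ν a (pcyl Y r))
    (hb : LxnLtinfPow b (pcyl Y r) ≤ ENNReal.ofReal S)
    (heq : ∀ X ∈ pcyl Y r, 0 ≤ -Dt u X + Lop a b u X) (M : ℝ)
    (hM : ∀ X ∈ closure (pcyl Y r), u X ≤ M) :
    ∃ v, SS ν S Y.1 r (Y.2 - r ^ 2) Y.2 v ∧ ∀ X ∈ closure (pcyl Y r), v X = M - u X := by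
  have hUo : IsOpen (pcyl Y r) := isOpen_ball.prod isOpen_Ioo
  obtain ⟨v, G, H, vt, hR, hv, hU⟩ := c21_reg u _ (pcyl Y r) isClosed_closure hUo subset_closure hu
  refine ⟨fun X => M - v X, ⟨_, _, _, fun x => essSup (fun t => (‖b (x, t)‖₊ : ℝ≥0∞)) (volume.restrict {t | (x, t) ∈ pcyl Y r}),
    hR.const_sub M, ?_, ?_, ?_⟩, fun X hX => by simp only [hv X hX]⟩
  · intro X hX
    rw [← closure_pcyl Y r hr] at hX
    rw [hv X hX]; linarith [hM X hX]
  · intro x hx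
    have hset : {t | (x, t) ∈ pcyl Y r} = Ioo (Y.2 - r ^ 2) Y.2 := by
      ext t; exact ⟨fun h => h.2, fun h => ⟨hx, h⟩⟩
    rw [hset]
    have hae := ENNReal.ae_le_essSup (μ := volume.restrict (Ioo (Y.2 - r ^ 2) Y.2)) (fun t => (‖b (x, t)‖₊ : ℝ≥0∞))
    filter_upwards [hae, ae_restrict_mem measurableSet_Ioo] with t h1 h2
    have hX : (x, t) ∈ pcyl Y r := ⟨hx, h2⟩
    obtain ⟨hG, hH, hT⟩ := hU _ hX
    refine ⟨a (x, t), ha _ hX, ‖b (x, t)‖₊, h1, ?_⟩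
    have h3 := heq _ hX
    have e1 : trA (a (x, t)) (-H (x, t)) = - ∑ i, ∑ j, a (x, t) i j * Dxx u i j (x, t) := by
      simp only [trA, FunLike.coe_neg, Pi.neg_apply, inner_neg_left, hH, mul_neg, Finset.sum_neg_distrib]
    have e2 : ∑ i, b (x, t) i * Dx u i (x, t) = ⟪b (x, t), G (x, t)⟫ := by
      simp only [PiLp.inner_apply, hG]
      refine Finset.sum_congr rfl fun i _ => ?_
      simp [mul_comm]
    have e3 := real_inner_le_norm (b (x, t)) (G (x, t))
    rw [Lop, e2] at h3
    rw [e1, hT, norm_neg, coe_nnnorm]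
    linarith
  · exact (setLIntegral_le_lintegral _ _).trans hb

/-- **Third Growth Theorem** (Theorem 5.4). -/
theorem third_growth_theorem
    (n : ℕ) (hn : 0 < n) (ν S μ : ℝ) (hν : 1 ≤ ν) (hμ : μ < 1) :
    ∃ β : ℝ, 0 < β ∧ β < 1 ∧
      ∀ (Y : En n × ℝ) (r : ℝ) (u : En n × ℝ → ℝ)
        (a : En n × ℝ → Matrix (Fin n) (Fin n) ℝ) (b : En n × ℝ → En n),
        0 < r →
        IsC21 u (closure (pcyl Y r)) →
        UnifParabolic ν a (pcyl Y r) →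
        LxnLtinfPow b (pcyl Y r) ≤ ENNReal.ofReal S →
        (∀ X ∈ pcyl Y r, 0 ≤ -Dt u X + Lop a b u X) →
        volume {X ∈ pcyl (Y.1, Y.2 - 3 / 4 * r ^ 2) (r / 2) | 0 < u X} ≤
          ENNReal.ofReal μ * volume (pcyl (Y.1, Y.2 - 3 / 4 * r ^ 2) (r / 2)) →
        supPos u (closure (pcyl Y (r / 2))) ≤ β * supPos u (closure (pcyl Y r)) := by
  have hμ0 : 0 < 1 - max μ 0 := by
    have : max μ 0 < 1 := max_lt hμ one_pos
    linarith
  obtain ⟨c, hc, hc1, hcore⟩ := third_growth_core n hn ν S (1 - max μ 0) hν hμ0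
  refine ⟨1 - c / 2, by linarith, by linarith, ?_⟩
  intro Y r u a b hr hu ha hb heq hvol
  have hr2 : 0 < r ^ 2 := by positivity
  set M := supPos u (closure (pcyl Y r)) with hMdef
  have hK := closure_pcyl Y r hr
  have hKc : IsCompact (closure (pcyl Y r)) := by
    rw [hK]; exact (isCompact_closedBall _ _).prod isCompact_Icc
  have hbdd : BddAbove ((fun X => max (u X) 0) '' closure (pcyl Y r)) :=
    (hKc.image_of_continuousOn (hu.cont.sup continuousOn_const)).bddAbove
  have hM : ∀ X ∈ closure (pcyl Y r), max (u X) 0 ≤ M := fun X hX =>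
    le_csSup hbdd (mem_image_of_mem _ hX)
  have hYK : Y ∈ closure (pcyl Y r) := by
    rw [hK]; exact ⟨mem_closedBall_self hr.le, by linarith, le_rfl⟩
  have hM0 : 0 ≤ M := (le_max_right _ _).trans (hM Y hYK)
  have hK2 := closure_pcyl Y (r / 2) (by positivity)
  have hsub : closure (pcyl Y (r / 2)) ⊆ closure (pcyl Y r) := by
    rw [hK, hK2]
    refine prod_mono (closedBall_subset_closedBall (by linarith)) (Icc_subset_Icc_left ?_)
    nlinarith
  have hgoal : ∀ X ∈ closure (pcyl Y (r / 2)), u X ≤ (1 - c / 2) * M := by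
    rcases hM0.eq_or_lt with h0 | hpos
    · intro X hX
      rw [← h0, mul_zero]
      rw [h0]
      exact (le_max_left _ _).trans (hM X (hsub hX))
    obtain ⟨v, hSS, hv⟩ := toSS ν S Y r u a b hr hu ha hb heq M (fun X hX => (le_max_left _ _).trans (hM X hX))
    have hQ0 : pcyl (Y.1, Y.2 - 3 / 4 * r ^ 2) (r / 2) = ball Y.1 (r / 2) ×ˢ Ioo (Y.2 - r ^ 2) (Y.2 - 3 / 4 * r ^ 2) := by
      rw [pcyl, box]
      congr 2
      simp only; ring
    rw [hQ0] at hvol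
    have hstar := hcore Y.1 r Y.2 v hr hSS (M / 2) (by positivity) (by
      set Q0 : Set (En n × ℝ) := ball Y.1 (r / 2) ×ˢ Ioo (Y.2 - r ^ 2) (Y.2 - 3 / 4 * r ^ 2) with hQ
      have hfin : volume Q0 ≠ ⊤ := by
        rw [hQ, vol_cyl _ _ _ _ (by positivity) (by linarith)]; exact ENNReal.ofReal_ne_top
      have hcov : Q0 ⊆ {X ∈ Q0 | 0 < u X} ∪ Lev v (M / 2) Y.1 (r / 2) (Y.2 - r ^ 2) (Y.2 - 3 / 4 * r ^ 2) := by
        intro X hX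
        by_cases h : 0 < u X
        · exact Or.inl ⟨hX, h⟩
        · right
          refine ⟨?_, hX⟩
          have hXK : X ∈ closure (pcyl Y r) := by
            rw [hK]
            exact ⟨ball_subset_closedBall (ball_subset_ball (by linarith) hX.1), hX.2.1.le, by linarith [hX.2.2]⟩
          show M / 2 < v X
          rw [hv X hXK]
          linarith
      have h1 : volume Q0 ≤ ENNReal.ofReal μ * volume Q0 + volume (Lev v (M / 2) Y.1 (r / 2) (Y.2 - r ^ 2) (Y.2 - 3 / 4 * r ^ 2)) :=
        (measure_mono hcov).trans ((measure_union_le _ _).trans (add_le_add_left hvol _))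
      have h2 : ENNReal.ofReal μ * volume Q0 + ENNReal.ofReal (1 - max μ 0) * volume Q0 = volume Q0 := by
        have e : ENNReal.ofReal μ = ENNReal.ofReal (max μ 0) := by
          rcases le_total μ 0 with h | h
          · rw [max_eq_right h, ENNReal.ofReal_of_nonpos h, ENNReal.ofReal_zero]
          · rw [max_eq_left h]
        rw [← add_mul, e, ← ENNReal.ofReal_add (le_max_right _ _) hμ0.le]
        simp
      have hne : ENNReal.ofReal μ * volume Q0 ≠ ⊤ := ENNReal.mul_ne_top ENNReal.ofReal_ne_top hfin
      exact (ENNReal.add_le_add_iff_left hne).1 (h2.trans_le h1))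
    intro X hX
    have hXK := hsub hX
    rw [hK2] at hX
    have := hstar X.1 hX.1 X.2 ⟨by linarith [hX.2.1], hX.2.2⟩
    have e : v (X.1, X.2) = M - u X := hv X hXK
    rw [e] at this
    linarith
  refine csSup_le ?_ ?_
  · refine ⟨_, mem_image_of_mem _ (x := Y) ?_⟩
    rw [hK2]; exact ⟨mem_closedBall_self (by positivity), by nlinarith, le_rfl⟩
  · rintro _ ⟨X, hX, rfl⟩
    refine max_le (hgoal X hX) (mul_nonneg (by linarith) hM0)
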